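/- arXiv:1401.3014 — 2 statements merged into one kernel-verified Lean document; each statement's English description precedes it below -/
import Mathlib

section
/- Let d ≥ 1, α > 0, β > α with β ∉ ℕ, and let r > α be an integer. Then there exists a bilinear map B : C^{−α}(ℝ^d) × C^β_loc(ℝ^d) → D'(ℝ^d) with the following properties. (i) If ξ ∈ C^{−α} is given by integration against a continuous function, then B(ξ, f) is the distribution given by integration against the pointwise product f·ξ, for every f ∈ C^β_loc. (ii) For every compact K ⊂ ℝ^d there is a constant C such that |B(ξ,f)(φ_x^λ)| ≤ C ‖ξ‖_{−α;K̄} ‖f‖_{β;K̄} λ^{−α} uniformly over φ ∈ B_r, x ∈ K, λ ∈ (0,1], where K̄ is the 2-neighbourhood of K; in particular B(ξ,f) ∈ C^{−α} and B is continuous in the sense that B(ξ_n, f_n)(ψ) → B(ξ,f)(ψ) for every compactly supported smooth ψ whenever ξ_n → ξ with respect to the C^{−α} seminorms and f_n → f with respect to the C^β seminorms on every compact set. (Extension of the pointwise product beyond continuous functions, for β > α.) -/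
/-!
The product is `B(ξ, f)(ψ) = lim ξ (moll κ e (f ψ))` along the dyadic scales `e = 2 ^ (-n)`, where
`moll κ e F` is the average of `F` at scale `e` against a fixed smooth kernel `κ`.

Fix a Hölder order `k + γ` with `α < k + γ ≤ β`, `0 < γ ≤ 1` and `k + 1 ≤ r` (`exists_order`). The
kernel is chosen so that `F - moll κ e F` is an average of `(k + 1)`-th finite differences of `F`
with steps of size at most `e` (`exists_kernel`); hence `|F - moll κ e F| ≤ A e ^ (k + γ)` when
`A` bounds the Hölder norm of `F = f ψ` (`abs_sub_moll_le`). Since averages at different scales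
commute,
`moll (e/2) F - moll e F = moll (e/2) (F - moll e F) - moll e (F - moll (e/2) F)`,
which is of size `O(e ^ (k + γ))` and loses only a factor `e⁻¹` per derivative
(`moll_bernstein`). Cutting such a function into cells of size `e` by a partition of unity
(`abs_le_of_scale`) and applying the `C^{-α}` bound of `ξ` to each cell shows that `ξ` of it is
`O(e ^ (k + γ - α))`. As `k + γ > α`, the limit exists by comparison with a geometric series, with a
bound at unit scale (`unit_scale_estimates`).

All of this is invariant under rescaling and recentring, so the same argument applied to
`ξ ∘ scalL x l` and `f (x + l •)` gives the bound by `l ^ (-α)` on `φ_x^l` (`scale_estimates`,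
`scal_bound`). A general test function is cut into pieces of unit scale (`exists_isProd`,
`ball_bound`). Bilinearity follows from uniqueness of limits. If `ξ` is integration against a
continuous function, then `moll κ e (f ψ)` tends to `f ψ` uniformly with supports in a fixed ball,
so the limit is the integral of the pointwise product (`eq_integral`). Continuity follows from
bilinearity and `ball_bound`.
-/

open MeasureTheory Metric Set Filter

noncomputable section

/-- Euclidean space `ℝ^d`. -/
abbrev Rd (d : ℕ) := EuclideanSpace ℝ (Fin d)

/-- The rescaled and recentred test function `φ_x^λ (y) = λ^{-d} φ(λ⁻¹(y-x))`. -/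
def scal {d : ℕ} (φ : Rd d → ℝ) (x : Rd d) (l : ℝ) : Rd d → ℝ :=
  fun y => (l ^ d)⁻¹ * φ (l⁻¹ • (y - x))

/-- The set `B_r` of `C^r` test functions supported in the unit ball with `C^r` norm at most 1. -/
def Br (d r : ℕ) : Set (Rd d → ℝ) :=
  {φ | ContDiff ℝ (r : ℕ∞) φ ∧ tsupport φ ⊆ closedBall (0 : Rd d) 1 ∧
    ∀ i ≤ r, ∀ y, ‖iteratedFDeriv ℝ i φ y‖ ≤ 1}

/-- A smooth compactly supported function. -/
def IsTestFunction {d : ℕ} (f : Rd d → ℝ) : Prop :=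
  ContDiff ℝ (⊤ : ℕ∞) f ∧ HasCompactSupport f

/-- The local continuity estimate making a linear functional on functions a distribution:
on every compact set it is bounded by some `C^k` norm of the test function. -/
def IsDistribution {d : ℕ} (u : (Rd d → ℝ) →ₗ[ℝ] ℝ) : Prop :=
  ∀ K : Set (Rd d), IsCompact K → ∃ C : ℝ, ∃ k : ℕ, ∀ f : Rd d → ℝ,
    IsTestFunction f → tsupport f ⊆ K → ∀ B : ℝ,
      (∀ i ≤ k, ∀ y, ‖iteratedFDeriv ℝ i f y‖ ≤ B) → |u f| ≤ C * B

/-- Total weight `|k|` of a multiindex. -/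
def wt {d : ℕ} (k : Fin d → ℕ) : ℕ := ∑ j, k j

/-- Factorial `k!` of a multiindex. -/
def mfac {d : ℕ} (k : Fin d → ℕ) : ℕ := ∏ j, (k j).factorial

/-- The monomial `x^k = ∏_j x_j^{k_j}`. -/
def mono {d : ℕ} (k : Fin d → ℕ) (x : Rd d) : ℝ := ∏ j, (x j) ^ (k j)

/-- Partial derivative in the `j`-th coordinate direction. -/
def pderiv1 {d : ℕ} (j : Fin d) (f : Rd d → ℝ) : Rd d → ℝ :=
  fun x => fderiv ℝ f x (EuclideanSpace.single j (1 : ℝ))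

/-- Iterated partial derivative in the `j`-th coordinate direction. -/
def pderivPow {d : ℕ} (j : Fin d) : ℕ → (Rd d → ℝ) → Rd d → ℝ
  | 0 => fun f => f
  | n + 1 => fun f => pderiv1 j (pderivPow j n f)

/-- The multiindex partial derivative `D^k f`. -/
def Dk {d : ℕ} (k : Fin d → ℕ) (f : Rd d → ℝ) : Rd d → ℝ :=
  ((List.ofFn fun j : Fin d => pderivPow j (k j)).foldr (· ∘ ·) id) f

/-- The `C^{-α}` seminorm bound of the linear functional `ξ` on the set `K` with constant `M`. -/
def NegBoundOn {d : ℕ} (r : ℕ) (α : ℝ) (ξ : (Rd d → ℝ) →ₗ[ℝ] ℝ)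
    (K : Set (Rd d)) (M : ℝ) : Prop :=
  ∀ φ ∈ Br d r, ∀ x ∈ K, ∀ l : ℝ, 0 < l → l ≤ 1 → |ξ (scal φ x l)| ≤ M * l ^ (-α)

/-- Membership in `C^{-α}(ℝ^d)` (with test functions in `B_r`). -/
def MemCneg {d : ℕ} (r : ℕ) (α : ℝ) (ξ : (Rd d → ℝ) →ₗ[ℝ] ℝ) : Prop :=
  IsDistribution ξ ∧ ∀ K : Set (Rd d), IsCompact K → ∃ M : ℝ, NegBoundOn r α ξ K M

/-- The `C^β` Hölder norm of `f` over `K` is bounded by `M`: all partial derivatives of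
order `≤ ⌊β⌋` are bounded by `M` on `K`, and those of order `⌊β⌋` are `(β-⌊β⌋)`-Hölder
with constant `M` on `K`. -/
def HolderBoundOn {d : ℕ} (β : ℝ) (f : Rd d → ℝ) (K : Set (Rd d)) (M : ℝ) : Prop :=
  (∀ ℓ : Fin d → ℕ, wt ℓ ≤ ⌊β⌋₊ → ∀ x ∈ K, |Dk ℓ f x| ≤ M) ∧
  (∀ ℓ : Fin d → ℕ, wt ℓ = ⌊β⌋₊ → ∀ x ∈ K, ∀ y ∈ K,
    |Dk ℓ f y - Dk ℓ f x| ≤ M * ‖y - x‖ ^ (β - ⌊β⌋₊))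

/-- Membership in the local Hölder space `C^β_loc(ℝ^d)` for non-integer `β > 0`. -/
def MemCβ {d : ℕ} (β : ℝ) (f : Rd d → ℝ) : Prop :=
  ContDiff ℝ (⌊β⌋₊ : ℕ∞) f ∧
  ∀ K : Set (Rd d), IsCompact K → ∃ M : ℝ, HolderBoundOn β f K M

/-! ### Partial derivatives and Fréchet derivatives -/

section PartialDerivatives
variable {d : ℕ}

/-- Iterated partial derivative along a list of coordinate directions (the head acts last). -/
def pderivList : List (Fin d) → (Rd d → ℝ) → Rd d → ℝ
  | [], f => f
  | j :: L, f => pderiv1 j (pderivList L f)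

lemma contDiff_pderiv1 (j : Fin d) {n : ℕ} {f : Rd d → ℝ}
    (hf : ContDiff ℝ ((n + 1 : ℕ) : WithTop ℕ∞) f) : ContDiff ℝ n (pderiv1 j f) := by
  unfold pderiv1
  exact (hf.fderiv_right (m := n) (by norm_cast)).clm_apply contDiff_const

lemma contDiff_pderivList (L : List (Fin d)) : ∀ {n : ℕ} {f : Rd d → ℝ},
    ContDiff ℝ ((n + L.length : ℕ) : WithTop ℕ∞) f → ContDiff ℝ n (pderivList L f) := by
  induction L with
  | nil => intro n f hf; simpa [pderivList] using hf
  | cons j L ih =>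
    intro n f hf
    refine contDiff_pderiv1 j (ih ?_)
    convert hf using 2
    simp; ring

lemma pderiv1_comm (a b : Fin d) {g : Rd d → ℝ} (hg : ContDiff ℝ 2 g) :
    pderiv1 a (pderiv1 b g) = pderiv1 b (pderiv1 a g) := by
  have hd : Differentiable ℝ (fderiv ℝ g) :=
    (hg.fderiv_right (m := 1) (by norm_num)).differentiable (by norm_num)
  have key : ∀ (u v : Rd d) x, fderiv ℝ (fun y => fderiv ℝ g y u) x v
      = fderiv ℝ (fderiv ℝ g) x v u := by
    intro u v x
    have := ((hd x).hasFDerivAt.clm_apply (hasFDerivAt_const u x)).fderiv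
    rw [this]; simp
  funext x
  unfold pderiv1
  rw [key, key]
  exact (hg.contDiffAt.isSymmSndFDerivAt (by simp)).eq _ _

lemma pderivList_perm {L L' : List (Fin d)} (h : L.Perm L') : ∀ {f : Rd d → ℝ},
    ContDiff ℝ (L.length : WithTop ℕ∞) f → pderivList L f = pderivList L' f := by
  induction h with
  | nil => intros; rfl
  | cons x h ih =>
    intro f hf
    simp only [pderivList]
    rw [ih (hf.of_le (by simp))]
  | swap x y L =>
    intro f hf
    simp only [pderivList]
    refine pderiv1_comm _ _ ?_
    refine contDiff_pderivList L (n := 2) ?_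
    convert hf using 2
    simp; ring
  | trans h1 h2 ih1 ih2 =>
    intro f hf
    rw [ih1 hf, ih2 (by rwa [← h1.length_eq])]

lemma pderivList_append (L L' : List (Fin d)) (f : Rd d → ℝ) :
    pderivList (L ++ L') f = pderivList L (pderivList L' f) := by
  induction L with
  | nil => rfl
  | cons a L ih => simp [pderivList, ih]

lemma pderivList_replicate (j : Fin d) (n : ℕ) (f : Rd d → ℝ) :
    pderivList (List.replicate n j) f = pderivPow j n f := by
  induction n with
  | zero => rfl
  | succ n ih => simp [List.replicate_succ, pderivList, pderivPow, ih]

lemma Dk_eq_pderivList (l : Fin d → ℕ) (f : Rd d → ℝ) :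
    Dk l f = pderivList ((List.finRange d).flatMap fun j => List.replicate (l j) j) f := by
  unfold Dk
  rw [List.ofFn_eq_map]
  generalize List.finRange d = J
  induction J with
  | nil => rfl
  | cons a J ih => simp [pderivList_append, pderivList_replicate, ih]

lemma perm_flatMap_count (L : List (Fin d)) :
    L.Perm ((List.finRange d).flatMap fun j => List.replicate (L.count j) j) := by
  rw [List.perm_iff_count]
  intro a
  rw [List.count_flatMap]
  have : (List.count a ∘ fun j => List.replicate (List.count j L) j)
      = fun j => if j = a then L.count j else 0 := by
    funext j
    simp [List.count_replicate]
  rw [this, ← List.ofFn_eq_map, List.sum_ofFn]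
  simp

lemma wt_count (L : List (Fin d)) : wt (fun j => L.count j) = L.length := by
  rw [(perm_flatMap_count L).length_eq, List.length_flatMap]
  simp [wt, ← List.ofFn_eq_map, List.sum_ofFn]

lemma iteratedFDeriv_eq_pderivList : ∀ (n : ℕ) {f : Rd d → ℝ} (i : Fin n → Fin d) (x : Rd d),
    ContDiff ℝ (n : WithTop ℕ∞) f →
    iteratedFDeriv ℝ n f x (fun t => EuclideanSpace.single (i t) (1 : ℝ))
      = pderivList (List.ofFn i) f x := by
  intro n
  induction n with
  | zero => intro f i x hf; simp [pderivList]
  | succ n ih =>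
    intro f i x hf
    rw [iteratedFDeriv_succ_apply_left, List.ofFn_succ, pderivList, pderiv1]
    have h1 : pderivList (List.ofFn fun t : Fin n => i t.succ) f = fun y => iteratedFDeriv ℝ n f y
        (fun t => EuclideanSpace.single (i t.succ) (1 : ℝ)) := by
      funext y
      exact (ih _ y (hf.of_le (by norm_cast; omega))).symm
    rw [h1]
    have hd : DifferentiableAt ℝ (iteratedFDeriv ℝ n f) x :=
      (hf.differentiable_iteratedFDeriv (m := n) (by norm_cast; omega)) x
    have := (hd.hasFDerivAt.continuousMultilinear_apply_const
      (fun t => EuclideanSpace.single (i t.succ) (1 : ℝ))).fderiv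
    rw [this]
    rfl

/-- Evaluating the `n`-th Fréchet derivative on basis vectors yields a multiindex derivative. -/
lemma exists_Dk_eq (n : ℕ) {f : Rd d → ℝ} (hf : ContDiff ℝ (n : WithTop ℕ∞) f)
    (i : Fin n → Fin d) : ∃ l : Fin d → ℕ, wt l = n ∧ ∀ x,
      iteratedFDeriv ℝ n f x (fun t => EuclideanSpace.single (i t) (1 : ℝ)) = Dk l f x := by
  refine ⟨fun j => (List.ofFn i).count j, by rw [wt_count]; simp, fun x => ?_⟩
  rw [iteratedFDeriv_eq_pderivList n i x hf, Dk_eq_pderivList,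
    ← pderivList_perm (perm_flatMap_count _) (by simpa using hf)]

lemma norm_multilinear_le_of_basis (n : ℕ)
    (T : ContinuousMultilinearMap ℝ (fun _ : Fin n => Rd d) ℝ) (A : ℝ) (hA : 0 ≤ A)
    (h : ∀ i : Fin n → Fin d, |T (fun t => EuclideanSpace.single (i t) (1 : ℝ))| ≤ A) :
    ‖T‖ ≤ (d : ℝ) ^ n * A := by
  refine ContinuousMultilinearMap.opNorm_le_bound (by positivity) fun v => ?_
  have hv : ∀ t, v t = ∑ j, v t j • EuclideanSpace.single j (1 : ℝ) := by
    intro t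
    have := (EuclideanSpace.basisFun (Fin d) ℝ).sum_repr (v t)
    simpa using this.symm
  have : T v = ∑ i : Fin n → Fin d, (∏ t, v t (i t)) •
      T (fun t => EuclideanSpace.single (i t) (1 : ℝ)) := by
    conv_lhs => rw [show v = fun t => ∑ j, v t j • EuclideanSpace.single j (1 : ℝ) from funext hv]
    rw [ContinuousMultilinearMap.map_sum]
    refine Finset.sum_congr rfl fun i _ => ?_
    rw [ContinuousMultilinearMap.map_smul_univ]
  rw [this]
  refine (norm_sum_le _ _).trans ?_
  have : ∀ i ∈ (Finset.univ : Finset (Fin n → Fin d)), ‖(∏ t, v t (i t)) •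
      T (fun t => EuclideanSpace.single (i t) (1 : ℝ))‖ ≤ (∏ t, ‖v t‖) * A := by
    intro i _
    rw [norm_smul, norm_prod]
    refine mul_le_mul ?_ (h i) (abs_nonneg _) (by positivity)
    exact Finset.prod_le_prod (fun _ _ => norm_nonneg _) fun t _ => PiLp.norm_apply_le _ _
  refine (Finset.sum_le_sum this).trans ?_
  simp [Finset.sum_const]
  apply le_of_eq; ring
end PartialDerivatives

/-! ### Partition of unity and localisation to a scale -/

section Partition
variable {d : ℕ}

/-- One-dimensional smooth bump supported in `[-1, 1]` whose integer translates sum to one. -/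
def bump1 (t : ℝ) : ℝ := Real.smoothTransition (t + 1) - Real.smoothTransition t

lemma contDiff_bump1 {n : ℕ∞} : ContDiff ℝ n bump1 := by
  unfold bump1
  exact (Real.smoothTransition.contDiff.comp (contDiff_id.add contDiff_const)).sub
    Real.smoothTransition.contDiff

lemma bump1_eq_zero {t : ℝ} (ht : 1 ≤ |t|) : bump1 t = 0 := by
  unfold bump1
  rcases le_abs'.1 ht with h | h
  · rw [Real.smoothTransition.zero_of_nonpos (by linarith),
      Real.smoothTransition.zero_of_nonpos (by linarith), sub_zero]
  · rw [Real.smoothTransition.one_of_one_le (by linarith),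
      Real.smoothTransition.one_of_one_le (by linarith), sub_self]

lemma sum_bump1 (N : ℕ) {t : ℝ} (ht : |t| ≤ N) :
    ∑ m ∈ Finset.range (2 * N + 1), bump1 (t + N - m) = 1 := by
  have h := Finset.sum_range_sub' (fun i : ℕ => Real.smoothTransition (t + N + 1 - i)) (2 * N + 1)
  have h1 : ∀ m : ℕ, bump1 (t + N - m) = Real.smoothTransition (t + N + 1 - m) -
      Real.smoothTransition (t + N + 1 - ((m + 1 : ℕ) : ℝ)) := by
    intro m
    unfold bump1
    congr 2 <;> push_cast <;> ring
  simp only [h1]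
  rw [h, Real.smoothTransition.one_of_one_le, Real.smoothTransition.zero_of_nonpos, sub_zero]
  · push_cast; linarith [(abs_le.1 ht).2]
  · push_cast; linarith [(abs_le.1 ht).1]

/-- The `d`-dimensional bump whose translates by the lattice `d⁻¹ ℤ^d` sum to one; the factor `d`
in the argument forces the support into the Euclidean unit ball. -/
def bumpD (y : Rd d) : ℝ := ∏ i, bump1 (d * y i)

lemma contDiff_bumpD {n : ℕ∞} : ContDiff ℝ n (bumpD (d := d)) := by
  unfold bumpD
  refine contDiff_prod fun i _ => contDiff_bump1.comp (contDiff_const.mul ?_)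
  exact (EuclideanSpace.proj (𝕜 := ℝ) i).contDiff

lemma bumpD_eq_zero (hd : 1 ≤ d) {y : Rd d} (hy : 1 < ‖y‖) : bumpD y = 0 := by
  have hd' : (1 : ℝ) ≤ d := by exact_mod_cast hd
  by_contra hne
  have h : ∀ i, |(d : ℝ) * y i| < 1 := by
    intro i
    by_contra hi
    exact hne (Finset.prod_eq_zero (Finset.mem_univ i) (bump1_eq_zero (not_lt.1 hi)))
  have h2 : ∀ i, y i ^ 2 ≤ 1 / (d : ℝ) := by
    intro i
    have h1 : ((d : ℝ) * y i) ^ 2 ≤ 1 := by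
      rw [← sq_abs]; have := h i; have := abs_nonneg ((d : ℝ) * y i); nlinarith
    rw [le_div_iff₀ (by positivity)]
    nlinarith [mul_nonneg (sq_nonneg (y i)) (by linarith : (0 : ℝ) ≤ d),
      mul_nonneg (mul_nonneg (sq_nonneg (y i)) (by linarith : (0 : ℝ) ≤ d))
        (by linarith : (0 : ℝ) ≤ (d : ℝ) - 1)]
  have h3 : ‖y‖ ^ 2 ≤ 1 := by
    rw [EuclideanSpace.norm_sq_eq]
    calc ∑ i, ‖y i‖ ^ 2 ≤ ∑ _i : Fin d, 1 / (d : ℝ) :=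
          Finset.sum_le_sum fun i _ => by rw [Real.norm_eq_abs, sq_abs]; exact h2 i
      _ = 1 := by simp; field_simp
  nlinarith

lemma iteratedFDeriv_affine {V : Type*} [NormedAddCommGroup V] [NormedSpace ℝ V] (n : ℕ)
    {G : Rd d → V} (hG : ContDiff ℝ n G) (x : Rd d) (e : ℝ) (z : Rd d) :
    iteratedFDeriv ℝ n (fun z => G (x + e • z)) z = e ^ n • iteratedFDeriv ℝ n G (x + e • z) := by
  have hG' : ContDiff ℝ n (fun z => G (x + z)) := hG.comp (contDiff_const.add contDiff_id)
  have h := congrFun (iteratedFDeriv_comp_const_smul e hG') z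
  rw [h, iteratedFDeriv_comp_add_left]

lemma exists_bound_iteratedFDeriv {V : Type*} [NormedAddCommGroup V] [NormedSpace ℝ V]
    {g : Rd d → V} (r : ℕ) (hg : ContDiff ℝ r g) (hs : HasCompactSupport g) :
    ∃ C : ℝ, 1 ≤ C ∧ ∀ j ≤ r, ∀ y, ‖iteratedFDeriv ℝ j g y‖ ≤ C := by
  have h : ∀ j ∈ Finset.range (r + 1), ∃ C : ℝ, ∀ y, ‖iteratedFDeriv ℝ j g y‖ ≤ C := by
    intro j hj
    have hj' : j ≤ r := by simpa [Nat.lt_succ_iff] using hj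
    exact (hs.iteratedFDeriv j).exists_bound_of_continuous
      (hg.continuous_iteratedFDeriv (by exact_mod_cast hj'))
  choose! C hC using h
  refine ⟨1 + ∑ j ∈ Finset.range (r + 1), |C j|, ?_, ?_⟩
  · linarith [Finset.sum_nonneg (s := Finset.range (r + 1)) fun j _ => abs_nonneg (C j)]
  · intro j hj y
    have hj' : j ∈ Finset.range (r + 1) := by simpa [Nat.lt_succ_iff] using hj
    have := Finset.single_le_sum (f := fun j => |C j|) (fun j _ => abs_nonneg _) hj'
    linarith [hC j hj' y, le_abs_self (C j)]

lemma norm_iteratedFDeriv_mul_le' {f g : Rd d → ℝ} {n : ℕ} (hf : ContDiff ℝ n f)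
    (hg : ContDiff ℝ n g) (y : Rd d) {A B : ℝ}
    (h1 : ∀ j ≤ n, ‖iteratedFDeriv ℝ j f y‖ ≤ A) (h2 : ∀ j ≤ n, ‖iteratedFDeriv ℝ j g y‖ ≤ B) :
    ‖iteratedFDeriv ℝ n (fun y => f y * g y) y‖ ≤ 2 ^ n * (A * B) := by
  refine (norm_iteratedFDeriv_mul_le hf hg y le_rfl).trans ?_
  have : ∀ i ∈ Finset.range (n + 1), (n.choose i : ℝ) * ‖iteratedFDeriv ℝ i f y‖ *
      ‖iteratedFDeriv ℝ (n - i) g y‖ ≤ n.choose i * (A * B) := by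
    intro i hi
    rw [mul_assoc]
    have hA : 0 ≤ A := (norm_nonneg _).trans (h1 0 (Nat.zero_le _))
    have hB : 0 ≤ B := (norm_nonneg _).trans (h2 0 (Nat.zero_le _))
    gcongr
    · exact h1 i (by simpa [Nat.lt_succ_iff] using hi)
    · exact h2 _ (Nat.sub_le _ _)
  refine (Finset.sum_le_sum this).trans ?_
  rw [← Finset.sum_mul]
  have := Nat.sum_range_choose n
  have h3 : ∑ i ∈ Finset.range (n + 1), (n.choose i : ℝ) = 2 ^ n := by exact_mod_cast this
  rw [h3]

/-- If a linear functional is at most `M` on all test functions of scale `e` centred near the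
support of `G`, and `G` varies at scale `e`, then cutting `G` into lattice cells of size `e` bounds
the functional at `G`. -/
lemma abs_le_of_scale (r : ℕ) (hd : 1 ≤ d) (R : ℝ) (hR : 0 ≤ R) :
    ∃ C : ℝ, 0 ≤ C ∧ ∀ (ξ : (Rd d → ℝ) →ₗ[ℝ] ℝ) (e M A : ℝ) (G : Rd d → ℝ),
      0 < e → e ≤ 1 → 0 ≤ M → 0 ≤ A → ContDiff ℝ r G → (∀ y, R < ‖y‖ → G y = 0) →
      (∀ j ≤ r, ∀ y, ‖iteratedFDeriv ℝ j G y‖ ≤ A * (e⁻¹) ^ j) →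
      (∀ φ ∈ Br d r, ∀ x ∈ closedBall (0 : Rd d) (R + e), |ξ (scal φ x e)| ≤ M) →
      |ξ G| ≤ C * M * A := by
  have hdpos : (0 : ℝ) < d := by exact_mod_cast hd
  have hcs : HasCompactSupport (bumpD (d := d)) :=
    HasCompactSupport.of_support_subset_isCompact (isCompact_closedBall (0 : Rd d) 1) (by
      intro y hy
      by_contra h
      exact hy (bumpD_eq_zero hd (by simpa using h)))
  obtain ⟨Cχ, hCχ1, hCχ⟩ := exists_bound_iteratedFDeriv r
    (contDiff_bumpD (d := d) (n := (r : ℕ∞))) hcs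
  refine ⟨(2 * d * R + 3) ^ d * (2 ^ r * Cχ), by positivity, ?_⟩
  intro ξ e M A G he he1 hM hA hG hsupp hGb hξ
  rcases hA.eq_or_lt with rfl | hApos
  · have : G = 0 := by
      funext y
      have := hGb 0 (Nat.zero_le _) y
      simpa using this
    simp [this]
  set N : ℕ := ⌈(d : ℝ) * R / e⌉₊ with hN
  set S := Fintype.piFinset (fun _ : Fin d => Finset.range (2 * N + 1)) with hS
  set c : ℝ := 2 ^ r * Cχ * A with hc
  have hcpos : 0 < c := by positivity
  -- centres of the cells
  let xk : (Fin d → ℕ) → Rd d := fun k => WithLp.toLp 2 fun i => e * ((k i : ℝ) - N) / d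
  let φ : (Fin d → ℕ) → Rd d → ℝ := fun k z => c⁻¹ * (bumpD z * G (xk k + e • z))
  have hsum : G = ∑ k ∈ S, (c * e ^ d) • scal (φ k) (xk k) e := by
    funext y
    rw [Finset.sum_apply]
    have h1 : ∀ k, ((c * e ^ d) • scal (φ k) (xk k) e) y
        = (∏ i, bump1 (d * y i / e + N - k i)) * G y := by
      intro k
      simp only [Pi.smul_apply, smul_eq_mul, scal, φ]
      rw [smul_inv_smul₀ he.ne', add_sub_cancel]
      have : bumpD (e⁻¹ • (y - xk k)) = ∏ i, bump1 (d * y i / e + N - k i) := by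
        unfold bumpD
        refine Finset.prod_congr rfl fun i _ => ?_
        congr 1
        simp [xk]
        field_simp
        ring
      rw [this]
      field_simp
    simp only [h1]
    rw [← Finset.sum_mul]
    by_cases hy : R < ‖y‖
    · simp [hsupp y hy]
    have hone : ∑ k ∈ S, ∏ i, bump1 (d * y i / e + N - k i) = 1 := by
      rw [hS, ← Finset.prod_univ_sum (fun _ => Finset.range (2 * N + 1))
        (fun i (m : ℕ) => bump1 (d * y i / e + N - m))]
      refine Finset.prod_eq_one fun i _ => sum_bump1 N ?_
      rw [abs_div, abs_mul, abs_of_pos he, abs_of_pos hdpos]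
      refine le_trans ?_ (Nat.le_ceil _)
      gcongr
      exact (PiLp.norm_apply_le y i).trans (not_lt.1 hy)
    rw [hone, one_mul]
  have hterm : ∀ k ∈ S, |ξ ((c * e ^ d) • scal (φ k) (xk k) e)| ≤ c * e ^ d * M := by
    intro k _
    rw [map_smul, smul_eq_mul, abs_mul, abs_of_pos (by positivity : 0 < c * e ^ d)]
    gcongr
    by_cases hx : xk k ∈ closedBall (0 : Rd d) (R + e)
    · refine hξ _ ?_ _ hx
      have hg : ContDiff ℝ r (fun z => G (xk k + e • z)) :=
        hG.comp (contDiff_const.add (contDiff_const_smul e))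
      have hχ : ContDiff ℝ r (bumpD (d := d)) := contDiff_bumpD (n := (r : ℕ∞))
      refine ⟨?_, ?_, ?_⟩
      · exact contDiff_const.mul (hχ.mul hg)
      · refine closure_minimal ?_ isClosed_closedBall
        intro z hz
        by_contra h
        exact hz (by simp [φ, bumpD_eq_zero hd (show 1 < ‖z‖ by simpa using h)])
      · intro j hj y
        have hj' : (j : WithTop ℕ∞) ≤ (r : WithTop ℕ∞) := by exact_mod_cast hj
        have e1 : iteratedFDeriv ℝ j (φ k) y = c⁻¹ • iteratedFDeriv ℝ j
            (fun z => bumpD z * G (xk k + e • z)) y :=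
          iteratedFDeriv_const_smul_apply' (a := c⁻¹) (x := y) ((hχ.mul hg).of_le hj').contDiffAt
        rw [e1, norm_smul, norm_inv, Real.norm_of_nonneg hcpos.le, inv_mul_le_iff₀ hcpos, mul_one]
        refine (norm_iteratedFDeriv_mul_le' (B := A) (hχ.of_le hj') (hg.of_le hj') y
          (fun i hi => hCχ i (hi.trans hj) y) ?_).trans ?_
        · intro i hi
          rw [iteratedFDeriv_affine i (hG.of_le (by exact_mod_cast hi.trans hj)), norm_smul,
            norm_pow, Real.norm_of_nonneg he.le]
          calc e ^ i * ‖iteratedFDeriv ℝ i G (xk k + e • y)‖ ≤ e ^ i * (A * e⁻¹ ^ i) := by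
                gcongr; exact hGb i (hi.trans hj) _
            _ = A := by rw [mul_left_comm, ← mul_pow, mul_inv_cancel₀ he.ne']; simp
        · rw [hc, mul_assoc]
          gcongr
          norm_num
    · have : φ k = 0 := by
        funext z
        by_cases hz : 1 < ‖z‖
        · simp [φ, bumpD_eq_zero hd hz]
        · have : R < ‖xk k + e • z‖ := by
            have h1 : R + e < ‖xk k‖ := by simpa using hx
            have h2 : ‖xk k‖ ≤ ‖xk k + e • z‖ + ‖e • z‖ := by
              simpa using norm_sub_le (xk k + e • z) (e • z)
            have h3 : ‖e • z‖ ≤ e := by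
              rw [norm_smul, Real.norm_of_nonneg he.le]
              nlinarith
            linarith
          simp [φ, hsupp _ this]
      have h0 : scal (φ k) (xk k) e = 0 := by
        funext y; simp [scal, this]
      simp [h0, hM]
  have hcard : (S.card : ℝ) * e ^ d ≤ (2 * d * R + 3) ^ d := by
    have : S.card = (2 * N + 1) ^ d := by simp [hS, Fintype.card_piFinset]
    rw [this]
    push_cast
    rw [← mul_pow]
    gcongr
    have h1 : (N : ℝ) < d * R / e + 1 := Nat.ceil_lt_add_one (by positivity)
    have h2 : (N : ℝ) * e ≤ d * R + e := by
      calc (N : ℝ) * e ≤ (d * R / e + 1) * e := by gcongr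
        _ = d * R + e := by field_simp
    nlinarith
  calc |ξ G| = |∑ k ∈ S, ξ ((c * e ^ d) • scal (φ k) (xk k) e)| := by
        conv_lhs => rw [hsum, map_sum]
    _ ≤ ∑ k ∈ S, c * e ^ d * M := (Finset.abs_sum_le_sum_abs _ _).trans (Finset.sum_le_sum hterm)
    _ = (S.card * e ^ d) * (c * M) := by rw [Finset.sum_const, nsmul_eq_mul]; ring
    _ ≤ (2 * d * R + 3) ^ d * (c * M) := by gcongr
    _ = _ := by rw [hc]; ring
end Partition

/-! ### Regularising kernels -/

section Mollifier
variable {d : ℕ}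

lemma norm_iteratedFDeriv_sub_le {V : Type*} [NormedAddCommGroup V] [NormedSpace ℝ V]
    {g : Rd d → V} {n : ℕ} (hg : ContDiff ℝ ((n + 1 : ℕ) : WithTop ℕ∞) g) {s : Set (Rd d)}
    (hs : Convex ℝ s) {A : ℝ} (h : ∀ y ∈ s, ‖iteratedFDeriv ℝ (n + 1) g y‖ ≤ A)
    {y z : Rd d} (hy : y ∈ s) (hz : z ∈ s) :
    ‖iteratedFDeriv ℝ n g y - iteratedFDeriv ℝ n g z‖ ≤ A * ‖y - z‖ := by
  refine hs.norm_image_sub_le_of_norm_fderiv_le (𝕜 := ℝ) (f := iteratedFDeriv ℝ n g)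
    (fun x _ => ?_) (fun x hx => ?_) hz hy
  · exact hg.differentiable_iteratedFDeriv (m := n) (by norm_cast; omega) x
  · rw [norm_fderiv_iteratedFDeriv]; exact h x hx

lemma iteratedFDeriv_fwdDiff {g : Rd d → ℝ} {n : ℕ} (hg : ContDiff ℝ n g) (v y : Rd d) :
    iteratedFDeriv ℝ n (fwdDiff v g) y = iteratedFDeriv ℝ n g (y + v) - iteratedFDeriv ℝ n g y := by
  have h1 : ContDiff ℝ n (fun y => g (y + v)) := hg.comp (contDiff_id.add contDiff_const)
  have h2 : fwdDiff v g = (fun y => g (y + v)) - g := rfl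
  rw [h2, iteratedFDeriv_sub_apply h1.contDiffAt hg.contDiffAt, iteratedFDeriv_comp_add_right]

lemma contDiff_fwdDiff {g : Rd d → ℝ} {n : WithTop ℕ∞} (hg : ContDiff ℝ n g) (v : Rd d) :
    ContDiff ℝ n (fwdDiff v g) :=
  (hg.comp (contDiff_id.add contDiff_const)).sub hg

lemma abs_fwdDiff_iter_le (v : Rd d) : ∀ (n : ℕ) {g : Rd d → ℝ} (_ : ContDiff ℝ n g) {A : ℝ}
    (_ : ∀ y, ‖iteratedFDeriv ℝ n g y‖ ≤ A) (x : Rd d), |((fwdDiff v)^[n] g) x| ≤ A * ‖v‖ ^ n := by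
  intro n
  induction n with
  | zero => intro g _ A hA x; simpa using hA x
  | succ n ih =>
    intro g hg A hA x
    have hgn : ContDiff ℝ n g := hg.of_le (by norm_cast; omega)
    rw [Function.iterate_succ_apply]
    refine (ih (contDiff_fwdDiff hgn v) (A := A * ‖v‖) (fun y => ?_) x).trans_eq (by ring)
    rw [iteratedFDeriv_fwdDiff hgn]
    simpa using norm_iteratedFDeriv_sub_le hg convex_univ (fun y _ => hA y)
      (mem_univ (y + v)) (mem_univ y)

/-- One difference uses the Hölder continuity of the `n`-th derivative, the other `n` differences
use the mean value inequality. -/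
lemma abs_fwdDiff_iter_le_of_holder (v : Rd d) (n : ℕ) {g : Rd d → ℝ} (hg : ContDiff ℝ n g)
    {A γ : ℝ} (hA : ∀ y z, ‖iteratedFDeriv ℝ n g y - iteratedFDeriv ℝ n g z‖ ≤ A * ‖y - z‖ ^ γ)
    (x : Rd d) : |((fwdDiff v)^[n + 1] g) x| ≤ A * ‖v‖ ^ γ * ‖v‖ ^ n := by
  rw [Function.iterate_succ_apply]
  refine abs_fwdDiff_iter_le v n (contDiff_fwdDiff hg v) (fun y => ?_) x
  rw [iteratedFDeriv_fwdDiff hg]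
  simpa using hA (y + v) y

/-- Average of `F` at scale `e` against the kernel `κ`. -/
def moll (κ : Rd d → ℝ) (e : ℝ) (F : Rd d → ℝ) (x : Rd d) : ℝ := ∫ h, κ h * F (x - e • h)

/-- A smooth kernel supported in the unit ball. -/
structure IsKernel (κ : Rd d → ℝ) : Prop where
  smooth : ContDiff ℝ (⊤ : ℕ∞) κ
  zero : ∀ h, 1 < ‖h‖ → κ h = 0

lemma hasCompactSupport_of_zero {g : Rd d → ℝ} {R : ℝ} (h : ∀ y, R < ‖y‖ → g y = 0) :
    HasCompactSupport g :=
  HasCompactSupport.of_support_subset_isCompact (isCompact_closedBall (0 : Rd d) R) (by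
    intro y hy
    by_contra hn
    exact hy (h y (by simpa using hn)))

lemma IsKernel.hcs {κ : Rd d → ℝ} (hκ : IsKernel κ) : HasCompactSupport κ :=
  hasCompactSupport_of_zero hκ.zero

lemma moll_integrable {κ : Rd d → ℝ} (hκ : Continuous κ) (hc : HasCompactSupport κ)
    {F : Rd d → ℝ} (hF : Continuous F) (e : ℝ) (x : Rd d) :
    Integrable (fun h => κ h * F (x - e • h)) :=
  Continuous.integrable_of_hasCompactSupport
    (hκ.mul (hF.comp (by fun_prop))) hc.mul_right

lemma moll_add {κ : Rd d → ℝ} (hκ : IsKernel κ) {F G : Rd d → ℝ} (hF : Continuous F)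
    (hG : Continuous G) (e : ℝ) : moll κ e (F + G) = moll κ e F + moll κ e G := by
  funext x
  simp only [moll, Pi.add_apply, mul_add]
  exact integral_add (moll_integrable hκ.smooth.continuous hκ.hcs hF e x)
    (moll_integrable hκ.smooth.continuous hκ.hcs hG e x)

lemma moll_smul (κ : Rd d → ℝ) (c : ℝ) (F : Rd d → ℝ) (e : ℝ) :
    moll κ e (c • F) = c • moll κ e F := by
  funext x
  simp only [moll, Pi.smul_apply, smul_eq_mul, mul_left_comm _ c]
  exact integral_const_mul _ _

lemma moll_sub {κ : Rd d → ℝ} (hκ : IsKernel κ) {F G : Rd d → ℝ} (hF : Continuous F)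
    (hG : Continuous G) (e : ℝ) : moll κ e (F - G) = moll κ e F - moll κ e G := by
  have h := moll_add hκ hF (hG.const_smul (-1 : ℝ)) e
  have h2 := moll_smul κ (-1) G e
  rw [show F - G = F + (-1 : ℝ) • G by funext x; simp [sub_eq_add_neg], h, h2]
  funext x; simp [sub_eq_add_neg]

lemma moll_zero {κ : Rd d → ℝ} (hκ : IsKernel κ) {F : Rd d → ℝ} {R e : ℝ} (he : 0 ≤ e)
    (hF : ∀ y, R < ‖y‖ → F y = 0) (x : Rd d) (hx : R + e < ‖x‖) : moll κ e F x = 0 := by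
  unfold moll
  rw [← integral_zero (Rd d) ℝ]
  congr 1
  funext h
  by_cases hh : 1 < ‖h‖
  · simp [hκ.zero h hh]
  · have h3 : ‖e • h‖ ≤ e := by
      rw [norm_smul, Real.norm_of_nonneg he]; nlinarith
    have h2 := norm_sub_norm_le x (e • h)
    rw [hF _ (by linarith), mul_zero]

open scoped Convolution in
lemma convolution_bernstein (j : ℕ) : ∀ {V W : Type} [NormedAddCommGroup V] [NormedSpace ℝ V]
    [NormedAddCommGroup W] [NormedSpace ℝ W] [CompleteSpace W] (L : V →L[ℝ] ℝ →L[ℝ] W)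
    (κ : Rd d → V), ContDiff ℝ (⊤ : ℕ∞) κ → HasCompactSupport κ →
    ∃ C : ℝ, 0 ≤ C ∧ ∀ (F : Rd d → ℝ) (A : ℝ), Continuous F → (∀ y, |F y| ≤ A) →
      ∀ x, ‖iteratedFDeriv ℝ j (κ ⋆[L, volume] F) x‖ ≤ C * A := by
  induction j with
  | zero =>
    intro V W _ _ _ _ _ L κ hκ hc
    have hint : Integrable (fun t => ‖κ t‖) :=
      (hκ.continuous.norm).integrable_of_hasCompactSupport hc.norm
    refine ⟨‖L‖ * ∫ t, ‖κ t‖, by positivity, fun F A hF hA x => ?_⟩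
    rw [norm_iteratedFDeriv_zero]
    have : ‖L‖ * (∫ t, ‖κ t‖) * A = ∫ t, (‖L‖ * A) * ‖κ t‖ := by
      rw [integral_const_mul]; ring
    rw [this]
    refine norm_integral_le_of_norm_le (hint.const_mul _) (Eventually.of_forall fun t => ?_)
    calc ‖L (κ t) (F (x - t))‖ ≤ ‖L‖ * ‖κ t‖ * ‖F (x - t)‖ := L.le_opNorm₂ _ _
      _ ≤ ‖L‖ * ‖κ t‖ * A := by gcongr; exact hA _
      _ = _ := by ring
  | succ j ih =>
    intro V W _ _ _ _ _ L κ hκ hc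
    obtain ⟨C, hC, h⟩ := ih (L.precompL (Rd d)) (fderiv ℝ κ)
      (hκ.fderiv_right (m := (⊤ : ℕ∞)) (by simp)) (hc.fderiv ℝ)
    refine ⟨C, hC, fun F A hF hA x => ?_⟩
    rw [← norm_iteratedFDeriv_fderiv]
    have : fderiv ℝ (κ ⋆[L, volume] F) = (fderiv ℝ κ) ⋆[L.precompL (Rd d), volume] F := by
      funext y
      exact (hc.hasFDerivAt_convolution_left L (hκ.of_le (by exact_mod_cast le_top))
        hF.locallyIntegrable y).fderiv
    rw [this]
    exact h F A hF hA x

open scoped Convolution in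
lemma moll_eq_convolution (κ : Rd d → ℝ) {e : ℝ} (he : 0 < e) (F : Rd d → ℝ) :
    moll κ e F = fun x => (κ ⋆[ContinuousLinearMap.mul ℝ ℝ, volume] (fun y => F (e • y)))
      (0 + e⁻¹ • x) := by
  funext x
  unfold moll convolution
  congr 1
  funext h
  simp [smul_sub, smul_smul, mul_inv_cancel₀ he.ne']

lemma contDiff_moll {κ : Rd d → ℝ} (hκ : IsKernel κ) {e : ℝ} (he : 0 < e) {F : Rd d → ℝ}
    (hF : Continuous F) : ContDiff ℝ (⊤ : ℕ∞) (moll κ e F) := by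
  rw [moll_eq_convolution κ he]
  have h : Continuous (fun y => F (e • y)) := hF.comp (continuous_const_smul e)
  exact (hκ.hcs.contDiff_convolution_left _ hκ.smooth h.locallyIntegrable).comp
    (contDiff_const.add (contDiff_const_smul _))

/-- Averaging at scale `e` costs a factor `e⁻¹` per derivative. -/
lemma moll_bernstein {κ : Rd d → ℝ} (hκ : IsKernel κ) (r : ℕ) :
    ∃ C : ℝ, 0 ≤ C ∧ ∀ (F : Rd d → ℝ) (A e : ℝ), Continuous F → 0 < e → (∀ y, |F y| ≤ A) →
      ∀ j ≤ r, ∀ x, ‖iteratedFDeriv ℝ j (moll κ e F) x‖ ≤ C * A * (e⁻¹) ^ j := by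
  choose C hC0 hC using fun j => convolution_bernstein j (ContinuousLinearMap.mul ℝ ℝ) κ
    hκ.smooth hκ.hcs
  refine ⟨∑ j ∈ Finset.range (r + 1), C j, Finset.sum_nonneg fun j _ => hC0 j, ?_⟩
  intro F A e hF he hA j hj x
  have h : Continuous (fun y => F (e • y)) := hF.comp (continuous_const_smul e)
  rw [moll_eq_convolution κ he, iteratedFDeriv_affine j
    ((hκ.hcs.contDiff_convolution_left _ hκ.smooth h.locallyIntegrable).of_le
      (by exact_mod_cast le_top)), norm_smul, norm_pow, Real.norm_of_nonneg (by positivity),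
    mul_comm]
  have hA0 : 0 ≤ A := (abs_nonneg _).trans (hA 0)
  gcongr
  refine (hC j _ A h (fun y => hA _) _).trans ?_
  gcongr
  exact Finset.single_le_sum (f := C) (fun j _ => hC0 j) (by simpa [Nat.lt_succ_iff] using hj)

lemma moll_comm {κ : Rd d → ℝ} (hκ : IsKernel κ) (a b : ℝ) {F : Rd d → ℝ} (hF : Continuous F) :
    moll κ a (moll κ b F) = moll κ b (moll κ a F) := by
  funext x
  unfold moll
  simp only [← integral_const_mul]
  rw [integral_integral_swap_of_hasCompactSupport]
  · congr 1; funext y; congr 1; funext z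
    rw [show x - a • z - b • y = x - b • y - a • z by abel]; ring
  · have := hκ.smooth.continuous
    exact (this.comp continuous_fst).mul ((this.comp continuous_snd).mul (hF.comp (by fun_prop)))
  · refine HasCompactSupport.of_support_subset_isCompact
      ((isCompact_closedBall (0 : Rd d) 1).prod (isCompact_closedBall (0 : Rd d) 1)) ?_
    rintro ⟨y, z⟩ hyz
    by_contra hn
    apply hyz
    simp only [Set.mem_prod, mem_closedBall, dist_zero_right, not_and_or, not_le] at hn
    rcases hn with hn | hn <;> simp [Function.uncurry, hκ.zero _ hn]

/-- There is a kernel for which `F - moll κ e F` is an average of `m`-th finite differences of `F`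
with steps of size at most `e`: if `ρ` has integral one and is supported in the ball of radius
`1 / m`, then `κ = ∑ (-1)^(i+1) (m choose i) i^(-d) ρ(· / i)`, summed over `1 ≤ i ≤ m`, works. -/
lemma exists_kernel (m : ℕ) (hm : 1 ≤ m) : ∃ κ : Rd d → ℝ, IsKernel κ ∧
    ∀ (F : Rd d → ℝ) (e A : ℝ) (x : Rd d), Continuous F → 0 ≤ e →
      (∀ v, ‖v‖ ≤ e → |((fwdDiff v)^[m] F) x| ≤ A) → |F x - moll κ e F x| ≤ A := by
  have hm0 : (0 : ℝ) < m := by exact_mod_cast hm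
  let b : ContDiffBump (0 : Rd d) := ⟨1 / (2 * m), 1 / m, by positivity, by
    rw [div_lt_div_iff₀ (by positivity) hm0]; linarith⟩
  let ρ : Rd d → ℝ := b.normed volume
  have hρs : ContDiff ℝ (⊤ : ℕ∞) ρ := b.contDiff_normed
  have hρc : HasCompactSupport ρ := b.hasCompactSupport_normed
  have hρ0 : ∀ h, 0 ≤ ρ h := b.nonneg_normed
  have hρ1 : ∫ h, ρ h = 1 := b.integral_normed
  have hρz : ∀ h, (1 : ℝ) < m * ‖h‖ → ρ h = 0 := by
    intro h hh
    by_contra hn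
    have h1 : h ∈ Function.support ρ := hn
    rw [b.support_normed_eq] at h1
    have h2 : ‖h‖ < 1 / m := by simpa [b] using h1
    rw [lt_div_iff₀ hm0] at h2
    linarith
  let c : ℕ → ℝ := fun i => (-1) ^ i * m.choose (i + 1)
  let κ : Rd d → ℝ := fun h => ∑ i ∈ Finset.range m,
    c i * ((((i + 1 : ℕ) : ℝ) ^ d)⁻¹ * ρ (((i + 1 : ℕ) : ℝ)⁻¹ • h))
  have hκ : IsKernel κ := by
    refine ⟨ContDiff.sum fun i _ => contDiff_const.mul (contDiff_const.mul
      (hρs.comp (contDiff_const_smul _))), fun h hh => Finset.sum_eq_zero fun i hi => ?_⟩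
    rw [hρz, mul_zero, mul_zero]
    have hi' : ((i + 1 : ℕ) : ℝ) ≤ m := by exact_mod_cast Finset.mem_range.1 hi
    have hi0 : (0 : ℝ) < ((i + 1 : ℕ) : ℝ) := by positivity
    rw [norm_smul, norm_inv, Real.norm_of_nonneg hi0.le, ← mul_assoc, ← div_eq_mul_inv]
    have : 1 ≤ (m : ℝ) / ((i + 1 : ℕ) : ℝ) := by rwa [one_le_div hi0]
    nlinarith
  refine ⟨κ, hκ, ?_⟩
  intro F e A x hF he hA
  have hint : ∀ a : ℝ, Integrable (fun h => ρ h * F (x - a • h)) := fun a =>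
    moll_integrable hρs.continuous hρc hF a x
  have h1 : moll κ e F x = ∑ i ∈ Finset.range m,
      c i * ∫ h, ρ h * F (x - (((i + 1 : ℕ) : ℝ) * e) • h) := by
    unfold moll
    have hfin : Module.finrank ℝ (Rd d) = d := by simp
    have h2 : ∀ i : ℕ, (fun h => (ρ (((i + 1 : ℕ) : ℝ)⁻¹ • h) * F (x - e • h))) = fun h =>
        (fun h' => ρ h' * F (x - (((i + 1 : ℕ) : ℝ) * e) • h')) (((i + 1 : ℕ) : ℝ)⁻¹ • h) := by
      intro i
      funext h
      have : ((i + 1 : ℕ) : ℝ) ≠ 0 := by positivity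
      simp only [smul_smul]
      rw [mul_comm (((i + 1 : ℕ) : ℝ)) e, mul_assoc, mul_inv_cancel₀ this, mul_one]
    have h3 : ∀ i : ℕ, Integrable (fun h => (ρ (((i + 1 : ℕ) : ℝ)⁻¹ • h) * F (x - e • h))) := by
      intro i
      rw [h2 i]
      exact (hint _).comp_smul (by positivity)
    have h4 : ∀ i : ℕ, ∫ h, (ρ (((i + 1 : ℕ) : ℝ)⁻¹ • h) * F (x - e • h)) =
        ((i + 1 : ℕ) : ℝ) ^ d * ∫ h, ρ h * F (x - (((i + 1 : ℕ) : ℝ) * e) • h) := by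
      intro i
      rw [h2 i, Measure.integral_comp_inv_smul volume
        (fun h' => ρ h' * F (x - (((i + 1 : ℕ) : ℝ) * e) • h')), hfin,
        abs_of_nonneg (by positivity), smul_eq_mul]
    have h5 : ∀ h, κ h * F (x - e • h) = ∑ i ∈ Finset.range m,
        (c i * (((i + 1 : ℕ) : ℝ) ^ d)⁻¹) * (ρ (((i + 1 : ℕ) : ℝ)⁻¹ • h) * F (x - e • h)) := by
      intro h
      simp only [κ, Finset.sum_mul]
      exact Finset.sum_congr rfl fun i _ => by ring
    simp only [h5]
    rw [integral_finsetSum _ fun i _ => (h3 i).const_mul _]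
    refine Finset.sum_congr rfl fun i _ => ?_
    rw [integral_const_mul, h4]
    have : ((i + 1 : ℕ) : ℝ) ^ d ≠ 0 := by positivity
    field_simp
  have h6 : F x - moll κ e F x = ∫ h, ρ h * ((-1) ^ m * ((fwdDiff (-(e • h)))^[m] F) x) := by
    have h7 : ∀ h, ρ h * ((-1) ^ m * ((fwdDiff (-(e • h)))^[m] F) x) = ρ h * F x -
        ∑ i ∈ Finset.range m, c i * (ρ h * F (x - (((i + 1 : ℕ) : ℝ) * e) • h)) := by
      intro h
      rw [fwdDiff_iter_eq_sum_shift, Finset.sum_range_succ', mul_add, mul_add, Finset.mul_sum,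
        Finset.mul_sum, add_comm, sub_eq_add_neg, ← Finset.sum_neg_distrib]
      congr 1
      · simp [← mul_assoc, ← mul_pow]
      · refine Finset.sum_congr rfl fun i hi => ?_
        have hi' : i + 1 ≤ m := Finset.mem_range.1 hi
        have e1 : x + (i + 1) • -(e • h) = x - (((i + 1 : ℕ) : ℝ) * e) • h := by
          rw [smul_neg, ← sub_eq_add_neg, mul_smul, ← Nat.cast_smul_eq_nsmul ℝ]
        have e2 : (-1 : ℝ) ^ m * (-1) ^ (m - (i + 1)) = (-1) ^ (i + 1) := by
          conv_lhs => rw [show m = (m - (i + 1)) + (i + 1) by omega]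
          rw [pow_add, Nat.add_sub_cancel, mul_right_comm, ← mul_pow]; simp
        rw [e1, zsmul_eq_mul]
        generalize F (x - (((i + 1 : ℕ) : ℝ) * e) • h) = w
        push_cast
        simp only [c]
        linear_combination (ρ h * (m.choose (i + 1) : ℝ) * w) * e2
    simp only [h7]
    have hρi : Integrable ρ := hρs.continuous.integrable_of_hasCompactSupport hρc
    rw [integral_sub (hρi.mul_const _) (integrable_finsetSum _ fun i _ => (hint _).const_mul _),
      integral_finsetSum _ (fun i _ => (hint _).const_mul _), integral_mul_const, hρ1, one_mul, h1]
    simp only [integral_const_mul]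
  rw [h6]
  have hρi : Integrable ρ := hρs.continuous.integrable_of_hasCompactSupport hρc
  calc |∫ h, ρ h * ((-1) ^ m * ((fwdDiff (-(e • h)))^[m] F) x)| ≤ ∫ h, ρ h * A := by
        rw [← Real.norm_eq_abs]
        refine norm_integral_le_of_norm_le (hρi.mul_const _) (Eventually.of_forall fun h => ?_)
        rw [norm_mul, norm_mul, norm_pow, norm_neg, norm_one, one_pow, one_mul,
          Real.norm_of_nonneg (hρ0 h)]
        by_cases hh : 1 < ‖h‖
        · have : ρ h = 0 := hρz h (by
            have : (1 : ℝ) ≤ m := by exact_mod_cast hm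
            nlinarith)
          simp [this]
        · refine mul_le_mul_of_nonneg_left (hA _ ?_) (hρ0 h)
          rw [norm_neg, norm_smul, Real.norm_of_nonneg he]
          nlinarith
    _ = A := by rw [integral_mul_const, hρ1, one_mul]
end Mollifier

/-! ### Hölder bounds and estimates at unit scale -/

section Estimates
variable {d : ℕ}

/-- Hölder bound of order `k + γ` on `U` in terms of Fréchet derivatives; all derivatives of order
at most `k` are required to be `γ`-Hölder, not only the top one. -/
def HolderFD (k : ℕ) (γ : ℝ) (f : Rd d → ℝ) (U : Set (Rd d)) (A : ℝ) : Prop :=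
  (∀ i ≤ k, ∀ y ∈ U, ‖iteratedFDeriv ℝ i f y‖ ≤ A) ∧
  (∀ i ≤ k, ∀ y ∈ U, ∀ z ∈ U,
    ‖iteratedFDeriv ℝ i f y - iteratedFDeriv ℝ i f z‖ ≤ A * ‖y - z‖ ^ γ)

lemma rpow_le_mul_rpow {t T s γ : ℝ} (ht : 0 ≤ t) (hT : t ≤ T) (hT1 : 1 ≤ T) (hγ : 0 < γ)
    (h1 : γ ≤ s) (h2 : s ≤ 1) : t ^ s ≤ T * t ^ γ := by
  rcases ht.eq_or_lt with rfl | ht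
  · rw [Real.zero_rpow (by linarith), Real.zero_rpow (by linarith)]; simp
  · rw [show s = (s - γ) + γ by ring, Real.rpow_add ht]
    gcongr
    calc t ^ (s - γ) ≤ T ^ (s - γ) := Real.rpow_le_rpow ht.le hT (by linarith)
      _ ≤ T ^ (1 : ℝ) := Real.rpow_le_rpow_of_exponent_le hT1 (by linarith)
      _ = T := Real.rpow_one T

/-- A Hölder bound of order `β` on multiindex derivatives controls Fréchet derivatives at any
Hölder order `k + γ ≤ β`. When `k < ⌊β⌋` the `k`-th derivative is even Lipschitz on the ball. -/
lemma HolderFD.of_holderBoundOn (hd : 1 ≤ d) {k : ℕ} {γ β R : ℝ} (hγ : 0 < γ) (hγ1 : γ ≤ 1)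
    (hR : 0 ≤ R) (hkβ : k + γ ≤ β) :
    ∃ C : ℝ, 0 ≤ C ∧ ∀ (f : Rd d → ℝ) (x : Rd d) (U : Set (Rd d)) (M : ℝ),
      ContDiff ℝ (⌊β⌋₊ : WithTop ℕ∞) f → 0 ≤ M → closedBall x R ⊆ U → HolderBoundOn β f U M →
      HolderFD k γ f (closedBall x R) (C * M) := by
  have hd' : (1 : ℝ) ≤ d := by exact_mod_cast hd
  set n := ⌊β⌋₊ with hn
  have hβ0 : 0 ≤ β := by have : (0 : ℝ) ≤ k := by positivity
                         linarith
  have hkn : k ≤ n := Nat.le_floor (by linarith)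
  have hβn : β < n + 1 := Nat.lt_floor_add_one β
  set D : ℝ := (d : ℝ) ^ n with hD
  have hD1 : 1 ≤ D := one_le_pow₀ hd'
  refine ⟨D * (2 * R + 1), by positivity, ?_⟩
  intro f x U M hf hM hU ⟨hb1, hb2⟩
  have h1 : ∀ i ≤ n, ∀ y ∈ U, ‖iteratedFDeriv ℝ i f y‖ ≤ D * M := by
    intro i hi y hy
    refine (norm_multilinear_le_of_basis i _ M hM fun v => ?_).trans ?_
    · obtain ⟨l, hl, hl'⟩ := exists_Dk_eq i (hf.of_le (by exact_mod_cast hi)) v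
      rw [hl']
      exact hb1 l (hl.trans_le hi) y hy
    · gcongr
      exact pow_le_pow_right₀ hd' hi
  have hdist : ∀ y ∈ closedBall x R, ∀ z ∈ closedBall x R, ‖y - z‖ ≤ 2 * R + 1 := by
    intro y hy z hz
    have := dist_triangle_right y z x
    rw [← dist_eq_norm]
    rw [mem_closedBall] at hy hz
    linarith
  refine ⟨fun i hi y hy => ?_, fun i hi y hy z hz => ?_⟩
  · refine (h1 i (hi.trans hkn) y (hU hy)).trans ?_
    gcongr
    nlinarith
  · rcases (hi.trans hkn).eq_or_lt with h | h
    · have hik : (k : ℝ) = n := by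
        have : k = n := by omega
        exact_mod_cast this
      have hle : ‖iteratedFDeriv ℝ i f y - iteratedFDeriv ℝ i f z‖
          ≤ (d : ℝ) ^ i * (M * ‖y - z‖ ^ (β - n)) := by
        refine norm_multilinear_le_of_basis i _ _ (by positivity) fun v => ?_
        obtain ⟨l, hl, hl'⟩ := exists_Dk_eq i (hf.of_le (by rw [h])) v
        simp only [sub_apply]
        rw [hl', hl']
        exact hb2 l (hl.trans h) z (hU hz) y (hU hy)
      refine hle.trans ?_
      rw [h]
      have := rpow_le_mul_rpow (norm_nonneg (y - z)) (hdist y hy z hz) (by linarith) hγ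
        (s := β - n) (by linarith) (by linarith)
      calc D * (M * ‖y - z‖ ^ (β - n)) ≤ D * (M * ((2 * R + 1) * ‖y - z‖ ^ γ)) := by gcongr
        _ = _ := by ring
    · have hle : ‖iteratedFDeriv ℝ i f y - iteratedFDeriv ℝ i f z‖ ≤ D * M * ‖y - z‖ :=
        norm_iteratedFDeriv_sub_le (hf.of_le (by exact_mod_cast h)) (convex_closedBall x R)
          (fun w hw => h1 (i + 1) h w (hU hw)) hy hz
      refine hle.trans ?_
      have := rpow_le_mul_rpow (norm_nonneg (y - z)) (hdist y hy z hz) (by linarith) hγ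
        (s := 1) (by linarith) le_rfl
      rw [Real.rpow_one] at this
      calc D * M * ‖y - z‖ ≤ D * M * ((2 * R + 1) * ‖y - z‖ ^ γ) := by gcongr
        _ = _ := by ring

/-- A global Hölder bound of order `k + γ`, without the intermediate derivatives. -/
def HolderGlobal (k : ℕ) (γ : ℝ) (H : Rd d → ℝ) (A : ℝ) : Prop :=
  (∀ y, |H y| ≤ A) ∧
  ∀ y z, ‖iteratedFDeriv ℝ k H y - iteratedFDeriv ℝ k H z‖ ≤ A * ‖y - z‖ ^ γ

/-- Multiplication by a cutoff `φ` supported in a smaller ball turns a Hölder bound on a ball into a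
global one. -/
lemma HolderFD.mul (k : ℕ) {γ R : ℝ} (hγ : 0 < γ) (hγ1 : γ ≤ 1) (hR : 0 ≤ R) :
    ∃ C : ℝ, 0 ≤ C ∧ ∀ (f φ : Rd d → ℝ) (A D : ℝ), ContDiff ℝ k f →
      ContDiff ℝ ((k + 1 : ℕ) : WithTop ℕ∞) φ → (∀ y, R < ‖y‖ → φ y = 0) →
      HolderFD k γ f (closedBall 0 (R + 1)) A →
      (∀ j ≤ k + 1, ∀ y, ‖iteratedFDeriv ℝ j φ y‖ ≤ D) →
      HolderGlobal k γ (fun y => f y * φ y) (C * (A * D)) := by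
  refine ⟨2 ^ k * (2 * R + 4), by positivity, ?_⟩
  intro f φ A D hf hφ hz ⟨hf1, hf2⟩ hD
  have hφk : ContDiff ℝ k φ := hφ.of_le (by norm_cast; omega)
  set H : Rd d → ℝ := fun y => f y * φ y with hH
  have hHk : ContDiff ℝ k H := hf.mul hφk
  have hA : 0 ≤ A := (norm_nonneg _).trans (hf1 0 (Nat.zero_le _) 0 (by simp; linarith))
  have hD0 : 0 ≤ D := (norm_nonneg _).trans (hD 0 (Nat.zero_le _) 0)
  have hAD : 0 ≤ A * D := by positivity
  have h2k : (1 : ℝ) ≤ 2 ^ k := one_le_pow₀ (by norm_num)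
  have hDz : ∀ y, R < ‖y‖ → iteratedFDeriv ℝ k H y = 0 := by
    intro y hy
    by_contra hn
    have h1 := support_iteratedFDeriv_subset (𝕜 := ℝ) k (f := H) hn
    have h2 : tsupport H ⊆ closedBall 0 R := by
      refine closure_minimal ?_ isClosed_closedBall
      intro w hw
      by_contra hc
      exact hw (by simp [hH, hz w (by simpa using hc)])
    have := h2 h1
    simp at this
    linarith
  have hDb : ∀ y, ‖iteratedFDeriv ℝ k H y‖ ≤ 2 ^ k * (A * D) := by
    intro y
    by_cases hy : R < ‖y‖
    · rw [hDz y hy, norm_zero]; positivity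
    · exact norm_iteratedFDeriv_mul_le' hf hφk y
        (fun j hj => hf1 j hj y (by simp; linarith)) (fun j hj => hD j (by omega) y)
  refine ⟨fun y => ?_, ?_⟩
  · by_cases hy : R < ‖y‖
    · simp only [hH]; rw [hz y hy]; simp; positivity
    · have h1 := hf1 0 (Nat.zero_le _) y (by simp; linarith)
      have h2 := hD 0 (Nat.zero_le _) y
      rw [norm_iteratedFDeriv_zero, Real.norm_eq_abs] at h1 h2
      rw [hH, abs_mul]
      calc |f y| * |φ y| ≤ A * D := by gcongr
        _ ≤ 2 ^ k * (2 * R + 4) * (A * D) := le_mul_of_one_le_left hAD (by nlinarith)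
  · -- a point outside the larger ball is at distance at least one from the support
    have far : ∀ y z, R + 1 < ‖y‖ → ‖iteratedFDeriv ℝ k H y - iteratedFDeriv ℝ k H z‖
        ≤ 2 ^ k * (2 * R + 4) * (A * D) * ‖y - z‖ ^ γ := by
      intro y z hy
      rw [hDz y (by linarith), zero_sub, norm_neg]
      by_cases hzR : R < ‖z‖
      · rw [hDz z hzR, norm_zero]; positivity
      · have h1 : 1 ≤ ‖y - z‖ := by have := norm_sub_norm_le y z; linarith
        have h2 : 1 ≤ ‖y - z‖ ^ γ := Real.one_le_rpow h1 hγ.le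
        calc ‖iteratedFDeriv ℝ k H z‖ ≤ 2 ^ k * (A * D) := hDb z
          _ = 2 ^ k * 1 * (A * D) * 1 := by ring
          _ ≤ _ := by gcongr; linarith
    intro y z
    by_cases hy : R + 1 < ‖y‖
    · exact far y z hy
    by_cases hz' : R + 1 < ‖z‖
    · rw [norm_sub_rev, norm_sub_rev y z]; exact far z y hz'
    have hym : y ∈ closedBall (0 : Rd d) (R + 1) := by simpa using hy
    have hzm : z ∈ closedBall (0 : Rd d) (R + 1) := by simpa using hz'
    set v := y - z with hv
    have hyv : y = z + v := by simp [hv]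
    have hdecomp : fwdDiff v H = (fun w => fwdDiff v f w * φ (w + v)) +
        fun w => f w * fwdDiff v φ w := by
      funext w
      simp only [fwdDiff, hH, Pi.add_apply]; ring
    have hφv : ContDiff ℝ k (fun w => φ (w + v)) := hφk.comp (contDiff_id.add contDiff_const)
    have hc1 : ContDiff ℝ k (fun w => fwdDiff v f w * φ (w + v)) :=
      (contDiff_fwdDiff hf v).mul hφv
    have hc2 : ContDiff ℝ k (fun w => f w * fwdDiff v φ w) := hf.mul (contDiff_fwdDiff hφk v)
    have e1 : iteratedFDeriv ℝ k H y - iteratedFDeriv ℝ k H z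
        = iteratedFDeriv ℝ k (fun w => fwdDiff v f w * φ (w + v)) z
          + iteratedFDeriv ℝ k (fun w => f w * fwdDiff v φ w) z := by
      rw [← iteratedFDeriv_add_apply hc1.contDiffAt hc2.contDiffAt, ← hdecomp,
        iteratedFDeriv_fwdDiff hHk, ← hyv]
    have hvT : ‖v‖ ≤ 2 * R + 3 := by
      have := norm_sub_le y z
      rw [hv]; linarith
    have hvγ := rpow_le_mul_rpow (norm_nonneg v) hvT (by linarith) hγ (s := 1) hγ1 le_rfl
    rw [Real.rpow_one] at hvγ
    have b1 : ‖iteratedFDeriv ℝ k (fun w => fwdDiff v f w * φ (w + v)) z‖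
        ≤ 2 ^ k * ((A * ‖v‖ ^ γ) * D) := by
      refine norm_iteratedFDeriv_mul_le' (contDiff_fwdDiff hf v) hφv z (fun j hj => ?_)
        (fun j hj => ?_)
      · rw [iteratedFDeriv_fwdDiff (hf.of_le (by exact_mod_cast hj)), ← hyv]
        exact hf2 j hj y hym z hzm
      · rw [iteratedFDeriv_comp_add_right]
        exact hD j (by omega) _
    have b2 : ‖iteratedFDeriv ℝ k (fun w => f w * fwdDiff v φ w) z‖
        ≤ 2 ^ k * (A * (D * ((2 * R + 3) * ‖v‖ ^ γ))) := by
      refine norm_iteratedFDeriv_mul_le' hf (contDiff_fwdDiff hφk v) z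
        (fun j hj => hf1 j hj z hzm) (fun j hj => ?_)
      rw [iteratedFDeriv_fwdDiff (hφk.of_le (by exact_mod_cast hj)), ← hyv]
      refine (norm_iteratedFDeriv_sub_le (hφ.of_le (by norm_cast; omega)) convex_univ
        (fun w _ => hD (j + 1) (by omega) w) (mem_univ y) (mem_univ z)).trans ?_
      gcongr
    rw [e1]
    refine (norm_add_le _ _).trans ((add_le_add b1 b2).trans_eq ?_)
    ring

lemma HolderFD.affine {k : ℕ} {γ : ℝ} (hγ : 0 < γ) {f : Rd d → ℝ} (hf : ContDiff ℝ k f)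
    {x : Rd d} {l R A : ℝ} (hl : 0 < l) (hl1 : l ≤ 1) (hR : 0 ≤ R)
    (h : HolderFD k γ f (closedBall x R) A) :
    HolderFD k γ (fun z => f (x + l • z)) (closedBall 0 R) A := by
  have hmem : ∀ y ∈ closedBall (0 : Rd d) R, x + l • y ∈ closedBall x R := by
    intro y hy
    simp only [mem_closedBall, dist_zero_right, dist_self_add_left, norm_smul,
      Real.norm_of_nonneg hl.le] at hy ⊢
    nlinarith [norm_nonneg y]
  have hA : 0 ≤ A := (norm_nonneg _).trans (h.1 0 (Nat.zero_le _) x (by simpa using hR))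
  refine ⟨fun i hi y hy => ?_, fun i hi y hy z hz => ?_⟩
  · rw [iteratedFDeriv_affine i (hf.of_le (by exact_mod_cast hi)), norm_smul, norm_pow,
      Real.norm_of_nonneg hl.le]
    calc l ^ i * ‖iteratedFDeriv ℝ i f (x + l • y)‖ ≤ 1 * A := by
          gcongr
          · exact pow_le_one₀ hl.le hl1
          · exact h.1 i hi _ (hmem y hy)
      _ = A := one_mul A
  · rw [iteratedFDeriv_affine i (hf.of_le (by exact_mod_cast hi)),
      iteratedFDeriv_affine i (hf.of_le (by exact_mod_cast hi)), ← smul_sub, norm_smul, norm_pow,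
      Real.norm_of_nonneg hl.le]
    have h1 := h.2 i hi _ (hmem y hy) _ (hmem z hz)
    have h2 : ‖x + l • y - (x + l • z)‖ ≤ ‖y - z‖ := by
      rw [add_sub_add_left_eq_sub, ← smul_sub, norm_smul, Real.norm_of_nonneg hl.le]
      exact mul_le_of_le_one_left (norm_nonneg _) hl1
    calc _ ≤ 1 * (A * ‖y - z‖ ^ γ) := by
          gcongr
          · exact pow_le_one₀ hl.le hl1
          · exact h1.trans (by gcongr)
      _ = _ := one_mul _

/-- The defining property of a kernel adapted to Hölder order `k + γ`, `0 < γ`. -/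
def IsAdapted (k : ℕ) (κ : Rd d → ℝ) : Prop :=
  ∀ (F : Rd d → ℝ) (e A : ℝ) (x : Rd d), Continuous F → 0 ≤ e →
    (∀ v, ‖v‖ ≤ e → |((fwdDiff v)^[k + 1] F) x| ≤ A) → |F x - moll κ e F x| ≤ A

lemma abs_sub_moll_le {k : ℕ} {κ : Rd d → ℝ} (hκa : IsAdapted k κ) {γ : ℝ} (hγ : 0 < γ)
    {H : Rd d → ℝ} {A : ℝ} (hH : ContDiff ℝ k H) (hA : HolderGlobal k γ H A) {e : ℝ} (he : 0 < e)
    (x : Rd d) : |H x - moll κ e H x| ≤ A * e ^ (k + γ) := by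
  have hA0 : 0 ≤ A := (abs_nonneg _).trans (hA.1 0)
  refine hκa H e _ x hH.continuous he.le fun v hv => ?_
  refine (abs_fwdDiff_iter_le_of_holder v k hH hA.2 x).trans ?_
  rw [Real.rpow_add he, Real.rpow_natCast, mul_comm (e ^ k), ← mul_assoc]
  gcongr

/-- Estimates at unit scale: the pairings `ξ (moll κ e H)` are bounded for `e` of order one, and
halving `e` changes them by at most `e ^ (k + γ - α)`. The second bound rests on
`moll_{e/2} - moll_e = moll_{e/2} (1 - moll_e) - moll_e (1 - moll_{e/2})`. -/
lemma unit_scale_estimates (r : ℕ) (hd : 1 ≤ d) {α γ : ℝ} (hα : 0 < α) (hγ : 0 < γ) {k : ℕ}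
    {κ : Rd d → ℝ} (hκ : IsKernel κ) (hκa : IsAdapted k κ) :
    ∃ C : ℝ, 0 ≤ C ∧ ∀ (ξ : (Rd d → ℝ) →ₗ[ℝ] ℝ) (M A : ℝ) (H : Rd d → ℝ), 0 ≤ M →
      NegBoundOn r α ξ (closedBall 0 2) M → ContDiff ℝ k H → (∀ y, 1 < ‖y‖ → H y = 0) →
      HolderGlobal k γ H A →
      (∀ e, 1 / 4 ≤ e → e ≤ 1 / 2 → |ξ (moll κ e H)| ≤ C * (M * A)) ∧
      (∀ e, 0 < e → e ≤ 1 / 2 →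
        |ξ (moll κ (e / 2) H) - ξ (moll κ e H)| ≤ C * (M * A) * e ^ (k + γ - α)) := by
  obtain ⟨C1, hC1, hsc⟩ := abs_le_of_scale (d := d) r hd (3 / 2) (by norm_num)
  obtain ⟨C2, hC2, hbern⟩ := moll_bernstein hκ r
  refine ⟨C1 * C2 * (4 ^ α + (2 ^ r + 1)), by positivity, ?_⟩
  intro ξ M A H hM hξ hH hz hA
  have hA0 : 0 ≤ A := (abs_nonneg _).trans (hA.1 0)
  have hHc := hH.continuous
  have hξ' : ∀ e, 0 < e → e ≤ 1 / 2 → ∀ φ ∈ Br d r, ∀ x ∈ closedBall (0 : Rd d) (3 / 2 + e),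
      |ξ (scal φ x e)| ≤ M * e ^ (-α) := by
    intro e he he2 φ hφ x hx
    exact hξ φ hφ x (closedBall_subset_closedBall (by linarith) hx) e he (by linarith)
  have hzm : ∀ e, 0 < e → e ≤ 1 / 2 → ∀ y, (3 / 2 : ℝ) < ‖y‖ → moll κ e H y = 0 := by
    intro e he he2 y hy
    exact moll_zero hκ he.le hz y (by linarith)
  have hsm : ∀ e, 0 < e → ContDiff ℝ r (moll κ e H) := fun e he =>
    (contDiff_moll hκ he hHc).of_le (by exact_mod_cast le_top)
  have hMA : 0 ≤ M * A := by positivity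
  refine ⟨fun e he he2 => ?_, fun e he he2 => ?_⟩
  · have he0 : 0 < e := by linarith
    refine (hsc ξ e (M * e ^ (-α)) (C2 * A) (moll κ e H) he0 (by linarith) (by positivity)
      (by positivity) (hsm e he0) (hzm e he0 he2)
      (hbern H A e hHc he0 hA.1) (hξ' e he0 he2)).trans ?_
    have h4 : e ^ (-α) ≤ 4 ^ α := by
      rw [Real.rpow_neg he0.le, ← Real.inv_rpow he0.le]
      refine Real.rpow_le_rpow (by positivity) ?_ hα.le
      rw [inv_le_comm₀ he0 (by norm_num)]; linarith
    calc C1 * (M * e ^ (-α)) * (C2 * A) ≤ C1 * (M * 4 ^ α) * (C2 * A) := by gcongr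
      _ = C1 * C2 * (4 ^ α + 0) * (M * A) := by ring
      _ ≤ _ := by gcongr; positivity
  · have he' : 0 < e / 2 := by positivity
    have hs := abs_sub_moll_le hκa hγ hH hA he
    have hs' : ∀ x, |H x - moll κ (e / 2) H x| ≤ A * e ^ (k + γ) := fun x =>
      (abs_sub_moll_le hκa hγ hH hA he' x).trans (by gcongr; linarith)
    have hc1 : Continuous (moll κ e H) := (contDiff_moll hκ he hHc).continuous
    have hc2 : Continuous (moll κ (e / 2) H) := (contDiff_moll hκ he' hHc).continuous
    have hdec : moll κ (e / 2) H - moll κ e H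
        = moll κ (e / 2) (H - moll κ e H) - moll κ e (H - moll κ (e / 2) H) := by
      rw [moll_sub hκ hHc hc1, moll_sub hκ hHc hc2, moll_comm hκ e (e / 2) hHc]
      abel
    have hsc' := hsc ξ e (M * e ^ (-α)) (C2 * (A * e ^ (k + γ)) * (2 ^ r + 1))
      (moll κ (e / 2) H - moll κ e H) he (by linarith) (by positivity) (by positivity)
      ((hsm _ he').sub (hsm e he)) (fun y hy => by
        simp [hzm e he he2 y hy, hzm _ he' (by linarith) y hy]) ?_ (hξ' e he he2)
    · rw [← map_sub]
      refine hsc'.trans ?_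
      have hexp : e ^ (k + γ - α : ℝ) = e ^ (-α) * e ^ (k + γ : ℝ) := by
        rw [← Real.rpow_add he]; congr 1; ring
      rw [hexp]
      calc _ = C1 * C2 * (0 + (2 ^ r + 1)) * (M * A) * (e ^ (-α) * e ^ (k + γ)) := by ring
        _ ≤ _ := by gcongr; positivity
    · intro j hj y
      have hb1 := hbern (H - moll κ e H) _ (e / 2) (hHc.sub hc1) he' (fun y => hs y) j hj y
      have hb2 := hbern (H - moll κ (e / 2) H) _ e (hHc.sub hc2) he (fun y => hs' y) j hj y
      have hcd : ∀ (G : Rd d → ℝ) (e : ℝ), Continuous G → 0 < e →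
          ContDiffAt ℝ j (moll κ e G) y := fun G e hG he =>
        ((contDiff_moll hκ he hG).of_le (by exact_mod_cast le_top)).contDiffAt
      rw [hdec, iteratedFDeriv_sub_apply (hcd _ _ (hHc.sub hc1) he')
        (hcd _ _ (hHc.sub hc2) he)]
      refine (norm_sub_le _ _).trans ((add_le_add hb1 hb2).trans ?_)
      have h2 : (e / 2)⁻¹ ^ j ≤ 2 ^ r * e⁻¹ ^ j := by
        rw [inv_div, div_eq_mul_inv, mul_pow]
        gcongr
        norm_num
      calc _ ≤ C2 * (A * e ^ (k + γ)) * (2 ^ r * e⁻¹ ^ j) + C2 * (A * e ^ (k + γ)) * e⁻¹ ^ j := by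
            gcongr
        _ = _ := by ring
end Estimates

/-! ### Scaling -/

section Scaling
variable {d : ℕ}

/-- Rescaling and recentring as a linear map on functions. -/
def scalL (x : Rd d) (l : ℝ) : (Rd d → ℝ) →ₗ[ℝ] (Rd d → ℝ) where
  toFun φ := scal φ x l
  map_add' φ ψ := by funext y; simp [scal, mul_add]
  map_smul' c φ := by funext y; simp [scal, mul_left_comm]

lemma scal_scal (φ : Rd d → ℝ) (x y : Rd d) {l : ℝ} (hl : 0 < l) (s : ℝ) :
    scal (scal φ y s) x l = scal φ (x + l • y) (l * s) := by
  funext z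
  have : s⁻¹ • (l⁻¹ • (z - x) - y) = (l * s)⁻¹ • (z - (x + l • y)) := by
    rw [mul_inv, mul_comm l⁻¹, mul_smul]
    congr 1
    rw [← sub_sub, smul_sub l⁻¹ (z - x), inv_smul_smul₀ hl.ne']
  simp only [scal, this]
  rw [mul_pow, mul_inv (l ^ d), mul_assoc]

lemma negBoundOn_comp_scalL {r : ℕ} {α : ℝ} {ξ : (Rd d → ℝ) →ₗ[ℝ] ℝ} {x : Rd d} {R M l : ℝ}
    (hl : 0 < l) (hl1 : l ≤ 1) (h : NegBoundOn r α ξ (closedBall x R) M) :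
    NegBoundOn r α (ξ ∘ₗ scalL x l) (closedBall 0 R) (M * l ^ (-α)) := by
  intro φ hφ y hy s hs hs1
  have h1 : x + l • y ∈ closedBall x R := by
    simp only [mem_closedBall, dist_zero_right, dist_self_add_left, norm_smul,
      Real.norm_of_nonneg hl.le] at hy ⊢
    nlinarith [norm_nonneg y]
  have h2 := h φ hφ _ h1 (l * s) (by positivity) (mul_le_one₀ hl1 hs.le hs1)
  rw [Real.mul_rpow hl.le hs.le, ← mul_assoc] at h2
  simpa [scalL, scal_scal φ x y hl] using h2

lemma moll_scal (κ H : Rd d → ℝ) (x : Rd d) (e l : ℝ) :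
    moll κ e (scal H x l) = scal (moll κ (e / l) H) x l := by
  funext y
  simp only [moll, scal]
  rw [← integral_const_mul]
  congr 1; funext h
  have : l⁻¹ • (y - e • h - x) = l⁻¹ • (y - x) - (e / l) • h := by
    rw [sub_right_comm, smul_sub, smul_smul, div_eq_inv_mul]
  rw [this]; ring

lemma mul_scal (f φ : Rd d → ℝ) (x : Rd d) {l : ℝ} (hl : 0 < l) :
    f * scal φ x l = scal (fun z => f (x + l • z) * φ z) x l := by
  funext y
  simp only [scal, Pi.mul_apply, smul_inv_smul₀ hl.ne', add_sub_cancel]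
  ring

lemma Br.zero {r : ℕ} {φ : Rd d → ℝ} (h : φ ∈ Br d r) : ∀ y, 1 < ‖y‖ → φ y = 0 := by
  intro y hy
  by_contra hn
  have := h.2.1 (subset_tsupport φ hn)
  simp at this
  linarith

/-- The key estimate at scale `l`: along the dyadic scales `2 ^ (-n)` that are small compared with
`l`, the regularised pairings `ξ (moll (f φ_x^l))` are bounded by `l ^ (-α)` and their increments
decay geometrically. The rank `N` from which this holds depends on `l` only. -/
lemma scale_estimates (r : ℕ) (hd : 1 ≤ d) {α γ : ℝ} (hα : 0 < α) (hγ : 0 < γ) (hγ1 : γ ≤ 1)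
    {k : ℕ} (hkr : k + 1 ≤ r) (hs : α < k + γ) {κ : Rd d → ℝ} (hκ : IsKernel κ)
    (hκa : IsAdapted k κ) :
    ∃ C : ℝ, 0 ≤ C ∧ ∀ l : ℝ, 0 < l → l ≤ 1 → ∃ N : ℕ,
      ∀ (ξ : (Rd d → ℝ) →ₗ[ℝ] ℝ) (f : Rd d → ℝ) (M A : ℝ) (x : Rd d), ∀ φ ∈ Br d r, 0 ≤ M →
      NegBoundOn r α ξ (closedBall x 2) M → ContDiff ℝ k f →
      HolderFD k γ f (closedBall x 2) A → ∀ n,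
      |ξ (moll κ ((1 / 2) ^ (N + n)) (f * scal φ x l))| ≤ C * (M * A) * l ^ (-α) ∧
      |ξ (moll κ ((1 / 2) ^ (N + n + 1)) (f * scal φ x l))
        - ξ (moll κ ((1 / 2) ^ (N + n)) (f * scal φ x l))|
        ≤ C * (M * A) * l ^ (-α) * ((1 / 2 : ℝ) ^ (k + γ - α)) ^ n := by
  obtain ⟨C1, hC1, hunit⟩ := unit_scale_estimates r hd hα hγ hκ hκa
  obtain ⟨C2, hC2, hmul⟩ := HolderFD.mul (d := d) k (R := 1) hγ hγ1 zero_le_one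
  set q : ℝ := (1 / 2 : ℝ) ^ (k + γ - α) with hq
  have hq0 : 0 < q := by positivity
  have hq1 : q < 1 := Real.rpow_lt_one (by norm_num) (by norm_num) (by linarith)
  have hq2 : 0 < 1 - q := by linarith
  refine ⟨C1 * C2 * (1 + (1 - q)⁻¹), by positivity, fun l hl hl1 => ?_⟩
  obtain ⟨m, hm1, hm2⟩ := exists_nat_pow_near_of_lt_one hl hl1 (y := (1 / 2 : ℝ)) (by norm_num)
    (by norm_num)
  -- with this rank the relative scale `2 ^ (-N) / l` lies in `[1/4, 1/2]`
  refine ⟨m + 2, fun ξ f M A x φ hφ hM hξ hf hfA => ?_⟩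
  have hA0 : 0 ≤ A := (norm_nonneg _).trans (hfA.1 0 (Nat.zero_le _) x (by simp))
  set H : Rd d → ℝ := fun z => f (x + l • z) * φ z with hH
  have hfa : ContDiff ℝ k (fun z => f (x + l • z)) := hf.comp (by fun_prop)
  have hφr : ContDiff ℝ (r : WithTop ℕ∞) φ := hφ.1
  have hHk : ContDiff ℝ k H := hfa.mul (hφr.of_le (by norm_cast; omega))
  have hHA : HolderGlobal k γ H (C2 * (A * 1)) := by
    refine hmul _ φ A 1 hfa (hφr.of_le (by norm_cast)) (Br.zero hφ) ?_
      (fun j hj y => hφ.2.2 j (by omega) y)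
    have := HolderFD.affine hγ hf hl hl1 (by norm_num) hfA
    norm_num
    exact this
  obtain ⟨hu1, hu2⟩ := hunit (ξ ∘ₗ scalL x l) (M * l ^ (-α)) _ H (by positivity)
    (negBoundOn_comp_scalL hl hl1 hξ) hHk (fun y hy => by simp [hH, Br.zero hφ y hy]) hHA
  set a : ℕ → ℝ := fun n => ξ (moll κ ((1 / 2) ^ (m + 2 + n)) (f * scal φ x l)) with ha
  have haeq : ∀ n, a n = (ξ ∘ₗ scalL x l) (moll κ ((1 / 2) ^ (m + 2 + n) / l) H) := by
    intro n
    simp only [ha]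
    rw [mul_scal f φ x hl, moll_scal]
    rfl
  have hlp : 0 < l ^ (-α) := by positivity
  set E : ℝ := C1 * C2 * (M * A) * l ^ (-α) with hE
  have hE0 : 0 ≤ E := by positivity
  have hEeq : C1 * (M * l ^ (-α) * (C2 * (A * 1))) = E := by rw [hE]; ring
  have hδ : (1 / 2 : ℝ) ^ (m + 2) / l ≤ 1 / 2 := by
    rw [div_le_iff₀ hl, pow_succ]
    linarith
  have hδ' : 1 / 4 ≤ (1 / 2 : ℝ) ^ (m + 2) / l := by
    rw [le_div_iff₀ hl, pow_add]
    linarith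
  have hinc : ∀ n, |a (n + 1) - a n| ≤ E * q ^ n := by
    intro n
    have h1 : (1 / 2 : ℝ) ^ (m + 2 + n) / l ≤ (1 / 2) ^ n := by
      rw [pow_add, mul_div_right_comm]
      exact mul_le_of_le_one_left (by positivity) (by linarith)
    have h1' : (1 / 2 : ℝ) ^ (m + 2 + n) / l ≤ 1 / 2 := by
      rw [pow_add, mul_div_right_comm]
      exact (mul_le_of_le_one_right (by positivity)
        (pow_le_one₀ (by norm_num) (by norm_num))).trans hδ
    have h2 := hu2 ((1 / 2 : ℝ) ^ (m + 2 + n) / l) (by positivity) h1'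
    rw [haeq, haeq, show m + 2 + (n + 1) = m + 2 + n + 1 by ring, pow_succ,
      show (1 / 2 : ℝ) ^ (m + 2 + n) * (1 / 2) / l = (1 / 2 : ℝ) ^ (m + 2 + n) / l / 2 by ring]
    refine h2.trans ?_
    rw [hEeq]
    gcongr
    calc _ ≤ ((1 / 2 : ℝ) ^ n) ^ (k + γ - α) :=
          Real.rpow_le_rpow (by positivity) h1 (by linarith)
      _ = q ^ n := by
          rw [hq, ← Real.rpow_natCast, ← Real.rpow_natCast, ← Real.rpow_mul (by norm_num),
            ← Real.rpow_mul (by norm_num), mul_comm]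
  have hsum : ∀ n, |a n| ≤ E + E * ∑ i ∈ Finset.range n, q ^ i := by
    intro n
    induction n with
    | zero =>
      simp only [Finset.range_zero, Finset.sum_empty, mul_zero, add_zero]
      rw [haeq, ← hEeq]
      exact hu1 _ hδ' hδ
    | succ n ih =>
      rw [Finset.sum_range_succ]
      have := abs_sub_abs_le_abs_sub (a (n + 1)) (a n)
      have := hinc n
      nlinarith
  have hCE : C1 * C2 * (1 + (1 - q)⁻¹) * (M * A) * l ^ (-α) = E + E * (1 - q)⁻¹ := by
    rw [hE]; ring
  intro n
  rw [hCE]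
  constructor
  · refine (hsum n).trans ?_
    gcongr
    rw [← tsum_geometric_of_lt_one hq0.le hq1]
    exact (summable_geometric_of_lt_one hq0.le hq1).sum_le_tsum _ (fun _ _ => by positivity)
  · refine (hinc n).trans ?_
    gcongr
    have : 0 ≤ E * (1 - q)⁻¹ := by positivity
    linarith
end Scaling

/-! ### The product as a limit -/

section Product
variable {d : ℕ}

/-- Compactly supported functions of class `C^r`. -/
def Crc (d r : ℕ) : Submodule ℝ (Rd d → ℝ) where
  carrier := {ψ | ContDiff ℝ (r : WithTop ℕ∞) ψ ∧ HasCompactSupport ψ}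
  add_mem' h1 h2 := ⟨h1.1.add h2.1, h1.2.add h2.2⟩
  zero_mem' := ⟨contDiff_const, HasCompactSupport.zero⟩
  smul_mem' c _ h := ⟨h.1.const_smul c, h.2.mono (Function.support_const_smul_subset c _)⟩

lemma exists_projC (d r : ℕ) : ∃ P : (Rd d → ℝ) →ₗ[ℝ] (Rd d → ℝ),
    (∀ ψ, P ψ ∈ Crc d r) ∧ ∀ ψ ∈ Crc d r, P ψ = ψ := by
  obtain ⟨g, hg⟩ := LinearMap.exists_leftInverse_of_injective (Crc d r).subtype
    (Submodule.ker_subtype _)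
  refine ⟨(Crc d r).subtype ∘ₗ g, fun ψ => (g ψ).2, fun ψ hψ => ?_⟩
  have := LinearMap.congr_fun hg ⟨ψ, hψ⟩
  simpa using congrArg Subtype.val this

/-- An arbitrary linear projection of the space of all functions onto `Crc d r`. Functionals are
defined on all functions here, and only their values on `Crc d r` are meaningful; composing with
this projection makes them total. -/
def projC (d r : ℕ) : (Rd d → ℝ) →ₗ[ℝ] (Rd d → ℝ) := (exists_projC d r).choose

lemma projC_mem (r : ℕ) (ψ : Rd d → ℝ) : projC d r ψ ∈ Crc d r := (exists_projC d r).choose_spec.1 ψ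

lemma projC_eq {r : ℕ} {ψ : Rd d → ℝ} (h : ψ ∈ Crc d r) : projC d r ψ = ψ :=
  (exists_projC d r).choose_spec.2 ψ h

lemma continuous_mul_projC (r : ℕ) {f : Rd d → ℝ} (hf : Continuous f) (ψ : Rd d → ℝ) :
    Continuous (f * projC d r ψ) := hf.mul (projC_mem r ψ).1.continuous

lemma exists_radius {ψ : Rd d → ℝ} (h : HasCompactSupport ψ) :
    ∃ R : ℝ, 0 ≤ R ∧ ∀ y, R < ‖y‖ → ψ y = 0 := by
  obtain ⟨R, hR⟩ := h.isCompact.isBounded.subset_closedBall (0 : Rd d)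
  refine ⟨max R 0, le_max_right _ _, fun y hy => ?_⟩
  by_contra hn
  have := hR (subset_tsupport ψ hn)
  simp only [mem_closedBall, dist_zero_right] at this
  exact absurd (this.trans (le_max_left _ _)) (not_le.2 hy)

lemma scal_mem_Crc {r : ℕ} {φ : Rd d → ℝ} (hφ : φ ∈ Br d r) (x : Rd d) {l : ℝ} (hl : 0 < l) :
    scal φ x l ∈ Crc d r := by
  have hφr : ContDiff ℝ (r : WithTop ℕ∞) φ := hφ.1
  refine ⟨contDiff_const.mul (hφr.comp (by fun_prop)),
    hasCompactSupport_of_zero (R := ‖x‖ + l) fun y hy => ?_⟩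
  simp only [scal]
  rw [Br.zero hφ, mul_zero]
  rw [norm_smul, norm_inv, Real.norm_of_nonneg hl.le, ← div_eq_inv_mul, lt_div_iff₀ hl]
  have := norm_le_norm_add_norm_sub x y
  rw [norm_sub_rev] at this
  linarith

lemma test_mem_Crc (r : ℕ) {ψ : Rd d → ℝ} (h : IsTestFunction ψ) : ψ ∈ Crc d r :=
  ⟨h.1.of_le (by exact_mod_cast le_top), h.2⟩

/-- The functional `ψ ↦ ξ (moll κ e (f ψ))` approximating the product of `f` and `ξ`. -/
def regProd (r : ℕ) {κ : Rd d → ℝ} (hκ : IsKernel κ) (ξ : (Rd d → ℝ) →ₗ[ℝ] ℝ) {f : Rd d → ℝ}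
    (hf : Continuous f) (e : ℝ) : (Rd d → ℝ) →ₗ[ℝ] ℝ where
  toFun ψ := ξ (moll κ e (f * projC d r ψ))
  map_add' ψ ψ' := by
    rw [map_add, mul_add, moll_add hκ (continuous_mul_projC r hf _) (continuous_mul_projC r hf _),
      map_add]
  map_smul' c ψ := by
    rw [map_smul, mul_smul_comm, moll_smul, map_smul]; rfl

/-- `u` is the product of `ξ` and `f`, in the sense of the limit of regularised pairings. -/
def IsProd (r : ℕ) (κ : Rd d → ℝ) (ξ : (Rd d → ℝ) →ₗ[ℝ] ℝ) (f : Rd d → ℝ)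
    (u : (Rd d → ℝ) →ₗ[ℝ] ℝ) : Prop :=
  ∀ ψ, Tendsto (fun n : ℕ => ξ (moll κ ((1 / 2) ^ n) (f * projC d r ψ))) atTop (nhds (u ψ))

namespace IsProd
variable {r : ℕ} {κ : Rd d → ℝ} {ξ ξ' u u' : (Rd d → ℝ) →ₗ[ℝ] ℝ} {f f' : Rd d → ℝ}

lemma unique (h : IsProd r κ ξ f u) (h' : IsProd r κ ξ f u') : u = u' :=
  LinearMap.ext fun ψ => tendsto_nhds_unique (h ψ) (h' ψ)

lemma add_left (h : IsProd r κ ξ f u) (h' : IsProd r κ ξ' f u') :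
    IsProd r κ (ξ + ξ') f (u + u') := fun ψ => (h ψ).add (h' ψ)

lemma sub_left (h : IsProd r κ ξ f u) (h' : IsProd r κ ξ' f u') :
    IsProd r κ (ξ - ξ') f (u - u') := fun ψ => (h ψ).sub (h' ψ)

lemma smul_left (c : ℝ) (h : IsProd r κ ξ f u) :
    IsProd r κ (c • ξ) f (c • u) := fun ψ => (h ψ).const_smul c

lemma add_right (hκ : IsKernel κ) (hf : Continuous f) (hf' : Continuous f')
    (h : IsProd r κ ξ f u) (h' : IsProd r κ ξ f' u') :
    IsProd r κ ξ (f + f') (u + u') := fun ψ => by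
  simp only [add_mul, moll_add hκ (continuous_mul_projC r hf ψ) (continuous_mul_projC r hf' ψ),
    map_add]
  exact (h ψ).add (h' ψ)

lemma sub_right (hκ : IsKernel κ) (hf : Continuous f) (hf' : Continuous f')
    (h : IsProd r κ ξ f u) (h' : IsProd r κ ξ f' u') :
    IsProd r κ ξ (f - f') (u - u') := fun ψ => by
  simp only [sub_mul, moll_sub hκ (continuous_mul_projC r hf ψ) (continuous_mul_projC r hf' ψ),
    map_sub]
  exact (h ψ).sub (h' ψ)

lemma smul_right (c : ℝ) (h : IsProd r κ ξ f u) : IsProd r κ ξ (c • f) (c • u) := fun ψ => by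
  simp only [smul_mul_assoc, moll_smul, map_smul]
  exact (h ψ).const_smul c
end IsProd

/-- Standing assumptions on the parameters: `k + γ > α` is the Hölder order retained from `f`, and
`κ` is a kernel adapted to it. -/
structure Params (d r k : ℕ) (α γ : ℝ) (κ : Rd d → ℝ) : Prop where
  hd : 1 ≤ d
  hα : 0 < α
  hγ : 0 < γ
  hγ1 : γ ≤ 1
  hkr : k + 1 ≤ r
  hs : α < k + γ
  hκ : IsKernel κ
  hκa : IsAdapted k κ

lemma NegBoundOn.mono {r : ℕ} {α : ℝ} {ξ : (Rd d → ℝ) →ₗ[ℝ] ℝ} {K K' : Set (Rd d)} {M : ℝ}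
    (h : NegBoundOn r α ξ K M) (hK : K' ⊆ K) : NegBoundOn r α ξ K' M :=
  fun φ hφ x hx => h φ hφ x (hK hx)

lemma HolderFD.mono {k : ℕ} {γ : ℝ} {f : Rd d → ℝ} {U U' : Set (Rd d)} {A : ℝ}
    (h : HolderFD k γ f U A) (hU : U' ⊆ U) : HolderFD k γ f U' A :=
  ⟨fun i hi y hy => h.1 i hi y (hU hy), fun i hi y hy z hz => h.2 i hi y (hU hy) z (hU hz)⟩

lemma HolderFD.add {k : ℕ} {γ : ℝ} {f g : Rd d → ℝ} {U : Set (Rd d)} {A B : ℝ}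
    (hf : ContDiff ℝ k f) (hg : ContDiff ℝ k g)
    (h : HolderFD k γ f U A) (h' : HolderFD k γ g U B) : HolderFD k γ (f + g) U (A + B) := by
  have he : ∀ i ≤ k, ∀ y, iteratedFDeriv ℝ i (f + g) y
      = iteratedFDeriv ℝ i f y + iteratedFDeriv ℝ i g y := fun i hi y =>
    iteratedFDeriv_add_apply (hf.of_le (by exact_mod_cast hi)).contDiffAt
      (hg.of_le (by exact_mod_cast hi)).contDiffAt
  refine ⟨fun i hi y hy => ?_, fun i hi y hy z hz => ?_⟩
  · rw [he i hi]
    exact (norm_add_le _ _).trans (add_le_add (h.1 i hi y hy) (h'.1 i hi y hy))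
  · rw [he i hi, he i hi, add_sub_add_comm, add_mul]
    exact (norm_add_le _ _).trans (add_le_add (h.2 i hi y hy z hz) (h'.2 i hi y hy z hz))

lemma closedBall_two_subset {x : Rd d} {R : ℝ} (hx : x ∈ closedBall (0 : Rd d) (R + 1)) :
    closedBall x 2 ⊆ closedBall 0 (R + 3) := by
  apply closedBall_subset_closedBall'
  rw [mem_closedBall] at hx
  linarith

namespace Params
variable {r k : ℕ} {α γ : ℝ} {κ : Rd d → ℝ}

/-- The regularised pairings converge: a test function is a superposition of unit scale ones, for
which the increments decay geometrically. -/
lemma exists_isProd (p : Params d r k α γ κ) {ξ : (Rd d → ℝ) →ₗ[ℝ] ℝ} {f : Rd d → ℝ}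
    (hξ : ∀ R, ∃ M, 0 ≤ M ∧ NegBoundOn r α ξ (closedBall 0 R) M) (hf : ContDiff ℝ k f)
    (hfA : ∀ R, ∃ A, HolderFD k γ f (closedBall 0 R) A) : ∃ u, IsProd r κ ξ f u := by
  obtain ⟨C, hC, hsc⟩ := scale_estimates r p.hd p.hα p.hγ p.hγ1 p.hkr p.hs p.hκ p.hκa
  obtain ⟨N, hN⟩ := hsc 1 one_pos le_rfl
  set q : ℝ := (1 / 2 : ℝ) ^ (k + γ - α) with hq
  have hq0 : 0 < q := by positivity
  have hq1 : q < 1 := Real.rpow_lt_one (by norm_num) (by norm_num) (by linarith [p.hs])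
  let L : ℕ → (Rd d → ℝ) →ₗ[ℝ] ℝ := fun n => regProd r p.hκ ξ hf.continuous ((1 / 2) ^ n)
  have hlim : ∀ ψ, ∃ a, Tendsto (fun n => L n ψ) atTop (nhds a) := by
    intro ψ
    have hP := projC_mem r ψ
    have hLP : ∀ n, L n ψ = L n (projC d r ψ) := by
      intro n
      change ξ _ = ξ _
      rw [projC_eq hP]
    simp only [hLP]
    set ψ' := projC d r ψ
    obtain ⟨R, hR, hz⟩ := exists_radius hP.2
    obtain ⟨C0, hC0, hab⟩ := abs_le_of_scale (d := d) r p.hd R hR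
    obtain ⟨D, hD1, hD⟩ := exists_bound_iteratedFDeriv r hP.1 hP.2
    obtain ⟨M, hM, hξM⟩ := hξ (R + 3)
    obtain ⟨A, hA⟩ := hfA (R + 3)
    have hA0 : 0 ≤ A := (norm_nonneg _).trans
      (hA.1 0 (Nat.zero_le _) 0 (mem_closedBall_self (by linarith)))
    have hinc : ∀ n, dist (L (n + N) ψ') (L (n + 1 + N) ψ') ≤ C0 * (C * (M * A)) * D * q ^ n := by
      intro n
      rw [dist_comm, Real.dist_eq, ← LinearMap.sub_apply]
      refine (hab (L (n + 1 + N) - L (n + N)) 1 (C * (M * A) * q ^ n) D ψ' one_pos le_rfl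
        (by positivity) (by linarith) hP.1 hz (fun j hj y => by simpa using hD j hj y)
        ?_).trans_eq (by ring)
      intro φ hφ x hx
      have h := (hN ξ f M A x φ hφ hM (hξM.mono (closedBall_two_subset hx)) hf
        (hA.mono (closedBall_two_subset hx)) n).2
      simp only [Real.one_rpow, mul_one] at h
      rw [LinearMap.sub_apply]
      change |ξ _ - ξ _| ≤ _
      rw [projC_eq (scal_mem_Crc hφ x one_pos), show n + 1 + N = N + n + 1 by ring,
        add_comm n N]
      exact h
    obtain ⟨a, ha⟩ := cauchySeq_tendsto_of_complete
      (cauchySeq_of_le_geometric q _ hq1 hinc)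
    exact ⟨a, (tendsto_add_atTop_iff_nat N).1 ha⟩
  choose a ha using hlim
  exact ⟨linearMapOfTendsto a L (tendsto_pi_nhds.2 ha), ha⟩

/-- The local `C^{-α}` bound on the product, inherited from the regularised pairings. -/
lemma scal_bound (p : Params d r k α γ κ) : ∃ C : ℝ, 0 ≤ C ∧
    ∀ (ξ u : (Rd d → ℝ) →ₗ[ℝ] ℝ) (f : Rd d → ℝ) (M A : ℝ) (x : Rd d), IsProd r κ ξ f u → 0 ≤ M →
      NegBoundOn r α ξ (closedBall x 2) M → ContDiff ℝ k f → HolderFD k γ f (closedBall x 2) A →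
      ∀ φ ∈ Br d r, ∀ l : ℝ, 0 < l → l ≤ 1 → |u (scal φ x l)| ≤ C * (M * A) * l ^ (-α) := by
  obtain ⟨C, hC, hsc⟩ := scale_estimates r p.hd p.hα p.hγ p.hγ1 p.hkr p.hs p.hκ p.hκa
  refine ⟨C, hC, fun ξ u f M A x hu hM hξ hf hA φ hφ l hl hl1 => ?_⟩
  obtain ⟨N, hN⟩ := hsc l hl hl1
  have h := (tendsto_add_atTop_iff_nat N).2 (hu (scal φ x l))
  refine le_of_tendsto' h.abs fun n => ?_
  rw [projC_eq (scal_mem_Crc hφ x hl), add_comm n N]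
  exact (hN ξ f M A x φ hφ hM hξ hf hA n).1

/-- The product is a distribution of order `r`: a `C^r` function supported in a ball is cut into
pieces of unit scale, to each of which `scal_bound` applies. -/
lemma ball_bound (p : Params d r k α γ κ) (R : ℝ) (hR : 0 ≤ R) : ∃ C : ℝ, 0 ≤ C ∧
    ∀ (ξ u : (Rd d → ℝ) →ₗ[ℝ] ℝ) (f : Rd d → ℝ) (M A : ℝ), IsProd r κ ξ f u → 0 ≤ M →
      NegBoundOn r α ξ (closedBall 0 (R + 3)) M → ContDiff ℝ k f →
      HolderFD k γ f (closedBall 0 (R + 3)) A →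
      ∀ (ψ : Rd d → ℝ) (D : ℝ), ContDiff ℝ r ψ → (∀ y, R < ‖y‖ → ψ y = 0) →
      (∀ j ≤ r, ∀ y, ‖iteratedFDeriv ℝ j ψ y‖ ≤ D) → |u ψ| ≤ C * (M * A) * D := by
  obtain ⟨C, hC, hsc⟩ := p.scal_bound
  obtain ⟨C0, hC0, hab⟩ := abs_le_of_scale (d := d) r p.hd R hR
  refine ⟨C0 * C, by positivity, fun ξ u f M A hu hM hξ hf hA ψ D hψ hz hD => ?_⟩
  have hA0 : 0 ≤ A := (norm_nonneg _).trans
    (hA.1 0 (Nat.zero_le _) 0 (mem_closedBall_self (by linarith)))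
  have hD0 : 0 ≤ D := (norm_nonneg _).trans (hD 0 (Nat.zero_le _) 0)
  refine (hab u 1 (C * (M * A)) D ψ one_pos le_rfl (by positivity) hD0 hψ hz
    (fun j hj y => by simpa using hD j hj y) fun φ hφ x hx => ?_).trans_eq (by ring)
  simpa using hsc ξ u f M A x hu hM (hξ.mono (closedBall_two_subset hx)) hf
    (hA.mono (closedBall_two_subset hx)) φ hφ 1 one_pos le_rfl

/-- For a continuous function the limit is the pointwise product, because `moll κ e (f ψ)` tends to
`f ψ` uniformly. -/
lemma eq_integral (p : Params d r k α γ κ) {ξ u : (Rd d → ℝ) →ₗ[ℝ] ℝ} {f g : Rd d → ℝ}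
    (hu : IsProd r κ ξ f u) (hf : ContDiff ℝ k f)
    (hfA : ∀ R, ∃ A, HolderFD k γ f (closedBall 0 R) A) (hg : Continuous g)
    (hξ : ∀ ψ : Rd d → ℝ, IsTestFunction ψ → ξ ψ = ∫ z, g z * ψ z) {ψ : Rd d → ℝ}
    (hψ : ψ ∈ Crc d r) : u ψ = ∫ z, f z * g z * ψ z := by
  obtain ⟨R, hR, hz⟩ := exists_radius hψ.2
  obtain ⟨D, hD1, hD⟩ := exists_bound_iteratedFDeriv r hψ.1 hψ.2
  obtain ⟨C, hC, hmul⟩ := HolderFD.mul (d := d) k p.hγ p.hγ1 hR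
  obtain ⟨A, hA⟩ := hfA (R + 1)
  have hkr := p.hkr
  have hH := hmul f ψ A D hf (hψ.1.of_le (by exact_mod_cast hkr)) hz hA
    (fun j hj y => hD j (by omega) y)
  set B := C * (A * D)
  set H : Rd d → ℝ := f * ψ with hHdef
  change HolderGlobal k γ H B at hH
  have hHk : ContDiff ℝ k H := hf.mul (hψ.1.of_le (by norm_cast; omega))
  have hHz : ∀ y, R < ‖y‖ → H y = 0 := fun y hy => by simp [hHdef, hz y hy]
  have hB : 0 ≤ B := (abs_nonneg _).trans (hH.1 0)
  have hks : 0 < (k + γ : ℝ) := p.hα.trans p.hs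
  have hpos : ∀ n : ℕ, (0 : ℝ) < (1 / 2) ^ n := fun n => by positivity
  have hle : ∀ n : ℕ, ((1 / 2 : ℝ) ^ n) ≤ 1 := fun n => pow_le_one₀ (by norm_num) (by norm_num)
  have herr : ∀ n x, |H x - moll κ ((1 / 2) ^ n) H x| ≤ B * ((1 / 2 : ℝ) ^ n) ^ (k + γ) :=
    fun n x => abs_sub_moll_le p.hκa p.hγ hHk hH (hpos n) x
  have hcont : ∀ n : ℕ, ContDiff ℝ (⊤ : ℕ∞) (moll κ ((1 / 2) ^ n) H) := fun n =>
    contDiff_moll p.hκ (hpos n) hHk.continuous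
  have hmz : ∀ (n : ℕ) y, R + 1 < ‖y‖ → moll κ ((1 / 2) ^ n) H y = 0 := fun n y hy =>
    moll_zero p.hκ (hpos n).le hHz y (by linarith [hle n])
  have h1 := hu ψ
  rw [projC_eq hψ] at h1
  refine tendsto_nhds_unique h1 ?_
  have h2 : ∀ n : ℕ, ξ (moll κ ((1 / 2) ^ n) (f * ψ)) = ∫ z, g z * moll κ ((1 / 2) ^ n) H z :=
    fun n => hξ _ ⟨hcont n, hasCompactSupport_of_zero (hmz n)⟩
  simp only [h2]
  refine tendsto_integral_of_dominated_convergence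
    ((closedBall (0 : Rd d) (R + 1)).indicator fun z => |g z| * (2 * B)) ?_ ?_ ?_ ?_
  · exact fun n => (hg.mul (hcont n).continuous).aestronglyMeasurable
  · rw [integrable_indicator_iff measurableSet_closedBall]
    exact (hg.abs.mul continuous_const).continuousOn.integrableOn_compact (isCompact_closedBall _ _)
  · refine fun n => Eventually.of_forall fun z => ?_
    by_cases hzz : z ∈ closedBall (0 : Rd d) (R + 1)
    · rw [indicator_of_mem hzz, norm_mul, Real.norm_eq_abs, Real.norm_eq_abs]
      gcongr
      have e1 := herr n z
      have e2 := hH.1 z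
      have e3 : B * ((1 / 2 : ℝ) ^ n) ^ (k + γ) ≤ B :=
        mul_le_of_le_one_right hB (Real.rpow_le_one (hpos n).le (hle n) hks.le)
      have e4 := abs_sub_abs_le_abs_sub (moll κ ((1 / 2) ^ n) H z) (H z)
      rw [abs_sub_comm] at e4
      linarith
    · rw [indicator_of_notMem hzz, hmz n z (by simpa using hzz)]
      simp
  · refine Eventually.of_forall fun z => ?_
    have h3 : Tendsto (fun n : ℕ => moll κ ((1 / 2) ^ n) H z) atTop (nhds (H z)) := by
      rw [tendsto_iff_dist_tendsto_zero]
      have h4 : Tendsto (fun n : ℕ => ((1 / 2 : ℝ) ^ n) ^ (k + γ : ℝ)) atTop (nhds 0) := by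
        have := (tendsto_pow_atTop_nhds_zero_of_lt_one (r := (1 / 2 : ℝ)) (by norm_num)
          (by norm_num)).rpow_const (p := (k + γ : ℝ)) (Or.inr hks.le)
        rwa [Real.zero_rpow hks.ne'] at this
      have h5 := h4.const_mul B
      rw [mul_zero] at h5
      refine squeeze_zero (fun _ => dist_nonneg) (fun n => ?_) h5
      rw [dist_comm, Real.dist_eq]
      exact herr n z
    have h6 := h3.const_mul (g z)
    rwa [show g z * H z = f z * g z * ψ z by simp only [hHdef, Pi.mul_apply]; ring] at h6
end Params
end Product

/-! ### The bilinear map -/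

/-- The product of `ξ` and `f` whenever the regularised pairings converge, and `0` otherwise. -/
def prodB {d : ℕ} (r : ℕ) (κ : Rd d → ℝ) (ξ : (Rd d → ℝ) →ₗ[ℝ] ℝ) (f : Rd d → ℝ) :
    (Rd d → ℝ) →ₗ[ℝ] ℝ :=
  open Classical in if h : ∃ u, IsProd r κ ξ f u then h.choose else 0

lemma prodB_spec {d r : ℕ} {κ : Rd d → ℝ} {ξ : (Rd d → ℝ) →ₗ[ℝ] ℝ} {f : Rd d → ℝ}
    (h : ∃ u, IsProd r κ ξ f u) : IsProd r κ ξ f (prodB r κ ξ f) := by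
  rw [prodB, dif_pos h]
  exact h.choose_spec

lemma NegBoundOn.of_le {d r : ℕ} {α : ℝ} {ξ : (Rd d → ℝ) →ₗ[ℝ] ℝ} {K : Set (Rd d)} {M M' : ℝ}
    (h : NegBoundOn r α ξ K M) (hM : M ≤ M') : NegBoundOn r α ξ K M' :=
  fun φ hφ x hx l hl hl1 => (h φ hφ x hx l hl hl1).trans (by gcongr)

lemma HolderBoundOn.of_le {d : ℕ} {β : ℝ} {f : Rd d → ℝ} {K : Set (Rd d)} {M M' : ℝ}
    (h : HolderBoundOn β f K M) (hM : M ≤ M') : HolderBoundOn β f K M' :=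
  ⟨fun l hl x hx => (h.1 l hl x hx).trans hM,
    fun l hl x hx y hy => (h.2 l hl x hx y hy).trans (by gcongr)⟩

/-- A Hölder order `k + γ` with `0 < γ ≤ 1` lying strictly above `α`, at most `β`, and with
`k + 1 ≤ r`. -/
lemma exists_order {r : ℕ} {α β : ℝ} (hα : 0 < α) (hβα : α < β) (hr : α < r) :
    ∃ (k : ℕ) (γ : ℝ), 0 < γ ∧ γ ≤ 1 ∧ k + 1 ≤ r ∧ α < k + γ ∧ k + γ ≤ β := by
  have h1 : (⌊α⌋₊ : ℝ) ≤ α := Nat.floor_le hα.le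
  have h2 : α < ⌊α⌋₊ + 1 := Nat.lt_floor_add_one α
  refine ⟨⌊α⌋₊, min (β - ⌊α⌋₊) 1, lt_min (by linarith) one_pos, min_le_right _ _,
    (Nat.floor_lt hα.le).2 hr, ?_, ?_⟩
  · rcases min_choice (β - ⌊α⌋₊) 1 with h | h <;> rw [h] <;> linarith
  · linarith [min_le_left (β - ⌊α⌋₊) (1 : ℝ)]

/-- **Extension of the pointwise product** (Theorem `thm:barrier`): for `β > α > 0` there
is a bilinear, continuous map `B : C^{-α} × C^β_loc → D'(ℝ^d)` extending the pointwise
product of continuous functions, with the local bound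
`|B(ξ,f)(φ_x^λ)| ≤ C ‖ξ‖_{-α;K̄} ‖f‖_{β;K̄} λ^{-α}`; in particular `B(ξ,f) ∈ C^{-α}`. -/
theorem product_extension
    (d r : ℕ) (hd : 1 ≤ d) (α β : ℝ) (hα : 0 < α) (hβα : α < β)
    (hβnotnat : ∀ m : ℕ, β ≠ m) (hr : α < r) :
    ∃ B : ((Rd d → ℝ) →ₗ[ℝ] ℝ) → (Rd d → ℝ) → ((Rd d → ℝ) →ₗ[ℝ] ℝ),
      -- bilinearity on the relevant spaces
      (∀ ξ ξ' f, MemCneg r α ξ → MemCneg r α ξ' → MemCβ β f →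
        B (ξ + ξ') f = B ξ f + B ξ' f) ∧
      (∀ (c : ℝ) ξ f, MemCneg r α ξ → MemCβ β f → B (c • ξ) f = c • B ξ f) ∧
      (∀ ξ f f', MemCneg r α ξ → MemCβ β f → MemCβ β f' →
        B ξ (f + f') = B ξ f + B ξ f') ∧
      (∀ (c : ℝ) ξ f, MemCneg r α ξ → MemCβ β f → B ξ (c • f) = c • B ξ f) ∧
      -- (i) extension of the pointwise product with a continuous function
      (∀ ξ f g, MemCneg r α ξ → MemCβ β f → Continuous g →
        (∀ ψ : Rd d → ℝ, IsTestFunction ψ → ξ ψ = ∫ z, g z * ψ z) →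
        ∀ ψ : Rd d → ℝ, IsTestFunction ψ → B ξ f ψ = ∫ z, f z * g z * ψ z) ∧
      -- (ii) local bound: B(ξ,f) ∈ C^{-α} with quantitative seminorm bound
      (∀ K : Set (Rd d), IsCompact K → ∃ C : ℝ,
        ∀ ξ f (M₁ M₂ : ℝ), MemCneg r α ξ → MemCβ β f → 0 ≤ M₁ → 0 ≤ M₂ →
          NegBoundOn r α ξ (Metric.cthickening 2 K) M₁ →
          HolderBoundOn β f (Metric.cthickening 2 K) M₂ →
          ∀ φ ∈ Br d r, ∀ x ∈ K, ∀ l : ℝ, 0 < l → l ≤ 1 →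
            |B ξ f (scal φ x l)| ≤ C * M₁ * M₂ * l ^ (-α)) ∧
      (∀ ξ f, MemCneg r α ξ → MemCβ β f → MemCneg r α (B ξ f)) ∧
      -- joint sequential continuity
      (∀ (ξs : ℕ → ((Rd d → ℝ) →ₗ[ℝ] ℝ)) (fs : ℕ → Rd d → ℝ)
          (ξ : (Rd d → ℝ) →ₗ[ℝ] ℝ) (f : Rd d → ℝ),
        (∀ m, MemCneg r α (ξs m)) → MemCneg r α ξ →
        (∀ m, MemCβ β (fs m)) → MemCβ β f →
        (∀ K : Set (Rd d), IsCompact K → ∀ ε : ℝ, 0 < ε → ∃ N : ℕ, ∀ m ≥ N,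
          NegBoundOn r α (ξs m - ξ) K ε) →
        (∀ K : Set (Rd d), IsCompact K → ∀ ε : ℝ, 0 < ε → ∃ N : ℕ, ∀ m ≥ N,
          HolderBoundOn β (fs m - f) K ε) →
        ∀ ψ : Rd d → ℝ, IsTestFunction ψ →
          Filter.Tendsto (fun m => B (ξs m) (fs m) ψ) Filter.atTop
            (nhds (B ξ f ψ))) := by
  obtain ⟨k, γ, hγ, hγ1, hkr, hs, hkβ⟩ := exists_order hα hβα hr
  obtain ⟨κ, hκ, hκa⟩ := exists_kernel (d := d) (k + 1) (by omega)
  have p : Params d r k α γ κ := ⟨hd, hα, hγ, hγ1, hkr, hs, hκ, hκa⟩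
  have hknat : k ≤ ⌊β⌋₊ := Nat.le_floor (by linarith)
  have hX : ∀ ξ : (Rd d → ℝ) →ₗ[ℝ] ℝ, MemCneg r α ξ → ∀ R, ∃ M, 0 ≤ M ∧
      NegBoundOn r α ξ (closedBall 0 R) M := by
    intro ξ hξ R
    obtain ⟨M, hM⟩ := hξ.2 _ (isCompact_closedBall 0 R)
    exact ⟨max M 0, le_max_right _ _, hM.of_le (le_max_left _ _)⟩
  have hFk : ∀ f : Rd d → ℝ, MemCβ β f → ContDiff ℝ k f := fun f hf =>
    hf.1.of_le (by exact_mod_cast hknat)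
  have hFc : ∀ f : Rd d → ℝ, MemCβ β f → Continuous f := fun f hf => (hFk f hf).continuous
  have hFA : ∀ f : Rd d → ℝ, MemCβ β f → ∀ R, ∃ A, HolderFD k γ f (closedBall 0 R) A := by
    intro f hf R
    obtain ⟨C, -, h⟩ := HolderFD.of_holderBoundOn (R := max R 0) hd hγ hγ1 (le_max_right _ _) hkβ
    obtain ⟨M, hM⟩ := hf.2 _ (isCompact_closedBall 0 (max R 0))
    exact ⟨_, (h f 0 _ (max M 0) hf.1 (le_max_right _ _) subset_rfl
      (hM.of_le (le_max_left _ _))).mono (closedBall_subset_closedBall (le_max_left _ _))⟩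
  have hB : ∀ ξ f, MemCneg r α ξ → MemCβ β f → IsProd r κ ξ f (prodB r κ ξ f) := fun ξ f hξ hf =>
    prodB_spec (p.exists_isProd (hX ξ hξ) (hFk f hf) (hFA f hf))
  have huniq : ∀ ξ f u, IsProd r κ ξ f u → prodB r κ ξ f = u := fun ξ f u h =>
    (prodB_spec ⟨u, h⟩).unique h
  have hii : ∀ K : Set (Rd d), IsCompact K → ∃ C : ℝ,
      ∀ ξ f (M₁ M₂ : ℝ), MemCneg r α ξ → MemCβ β f → 0 ≤ M₁ → 0 ≤ M₂ →
        NegBoundOn r α ξ (Metric.cthickening 2 K) M₁ →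
        HolderBoundOn β f (Metric.cthickening 2 K) M₂ →
        ∀ φ ∈ Br d r, ∀ x ∈ K, ∀ l : ℝ, 0 < l → l ≤ 1 →
          |prodB r κ ξ f (scal φ x l)| ≤ C * M₁ * M₂ * l ^ (-α) := by
    intro K _
    obtain ⟨C, hC, h⟩ := p.scal_bound
    obtain ⟨C', hC', h'⟩ := HolderFD.of_holderBoundOn (R := 2) hd hγ hγ1 (by norm_num) hkβ
    refine ⟨C * C', fun ξ f M₁ M₂ hξ hf hM₁ hM₂ hξM hfM φ hφ x hx l hl hl1 => ?_⟩
    have hsub : closedBall x 2 ⊆ cthickening 2 K := closedBall_subset_cthickening hx 2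
    exact (h ξ _ f M₁ (C' * M₂) x (hB ξ f hξ hf) hM₁ (hξM.mono hsub) (hFk f hf)
      (h' f x _ M₂ hf.1 hM₂ hsub hfM) φ hφ l hl hl1).trans_eq (by ring)
  refine ⟨prodB r κ, ?_, ?_, ?_, ?_, ?_, hii, ?_, ?_⟩
  · exact fun ξ ξ' f hξ hξ' hf => huniq _ _ _ ((hB ξ f hξ hf).add_left (hB ξ' f hξ' hf))
  · exact fun c ξ f hξ hf => huniq _ _ _ ((hB ξ f hξ hf).smul_left c)
  · exact fun ξ f f' hξ hf hf' => huniq _ _ _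
      ((hB ξ f hξ hf).add_right hκ (hFc f hf) (hFc f' hf') (hB ξ f' hξ hf'))
  · exact fun c ξ f hξ hf => huniq _ _ _ ((hB ξ f hξ hf).smul_right c)
  · exact fun ξ f g hξ hf hg hint ψ hψ =>
      p.eq_integral (hB ξ f hξ hf) (hFk f hf) (hFA f hf) hg hint (test_mem_Crc r hψ)
  · intro ξ f hξ hf
    refine ⟨fun K hK => ?_, fun K hK => ?_⟩
    · obtain ⟨R, hR⟩ := hK.isBounded.subset_closedBall (0 : Rd d)
      obtain ⟨C, hC, h⟩ := p.ball_bound (max R 0) (le_max_right _ _)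
      obtain ⟨M, hM, hξM⟩ := hX ξ hξ (max R 0 + 3)
      obtain ⟨A, hA⟩ := hFA f hf (max R 0 + 3)
      refine ⟨C * (M * A), r, fun ψ hψ hsupp D hD => ?_⟩
      refine h ξ _ f M A (hB ξ f hξ hf) hM hξM (hFk f hf) hA ψ D (test_mem_Crc r hψ).1 ?_ hD
      intro y hy
      by_contra hn
      have := hR (hsupp (subset_tsupport ψ hn))
      simp only [mem_closedBall, dist_zero_right] at this
      exact absurd (this.trans (le_max_left _ _)) (not_le.2 hy)
    · obtain ⟨C, h⟩ := hii K hK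
      obtain ⟨M₁, hM₁⟩ := hξ.2 _ (hK.cthickening (r := 2))
      obtain ⟨M₂, hM₂⟩ := hf.2 _ (hK.cthickening (r := 2))
      exact ⟨_, fun φ hφ x hx l hl hl1 => h ξ f (max M₁ 0) (max M₂ 0) hξ hf (le_max_right _ _)
        (le_max_right _ _) (hM₁.of_le (le_max_left _ _)) (hM₂.of_le (le_max_left _ _))
        φ hφ x hx l hl hl1⟩
  · intro ξs fs ξ f hξs hξ hfs hf hcξ hcf ψ hψ
    have hψr := test_mem_Crc r hψ
    obtain ⟨R, hR, hz⟩ := exists_radius hψr.2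
    obtain ⟨D, hD1, hD⟩ := exists_bound_iteratedFDeriv r hψr.1 hψr.2
    obtain ⟨C, hC, hbd⟩ := p.ball_bound R hR
    obtain ⟨C', hC', hH⟩ := HolderFD.of_holderBoundOn (R := R + 3) hd hγ hγ1 (by linarith) hkβ
    obtain ⟨M, hM, hξM⟩ := hX ξ hξ (R + 3)
    obtain ⟨A, hA⟩ := hFA f hf (R + 3)
    have hA0 : 0 ≤ A := (norm_nonneg _).trans
      (hA.1 0 (Nat.zero_le _) 0 (mem_closedBall_self (by linarith)))
    set T : ℝ := C * (A + C' + M * C') * D with hT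
    have hD0 : 0 ≤ D := by linarith
    have hT0 : 0 ≤ T := by positivity
    rw [Metric.tendsto_atTop]
    intro η hη
    set ε : ℝ := min 1 (η / (T + 1)) with hε
    have hε0 : 0 < ε := lt_min one_pos (by positivity)
    have hε1 : ε ≤ 1 := min_le_left _ _
    obtain ⟨N₁, hN₁⟩ := hcξ _ (isCompact_closedBall 0 (R + 3)) ε hε0
    obtain ⟨N₂, hN₂⟩ := hcf _ (isCompact_closedBall 0 (R + 3)) ε hε0
    refine ⟨max N₁ N₂, fun m hm => ?_⟩
    have e1 := hN₁ m (le_of_max_le_left hm)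
    have e2 : HolderFD k γ (fs m - f) (closedBall 0 (R + 3)) (C' * ε) :=
      hH (fs m - f) 0 _ ε ((hfs m).1.sub hf.1) hε0.le subset_rfl (hN₂ m (le_of_max_le_right hm))
    have e3 : HolderFD k γ (fs m) (closedBall 0 (R + 3)) (A + C' * ε) := by
      have : HolderFD k γ (f + (fs m - f)) (closedBall 0 (R + 3)) (A + C' * ε) :=
        hA.add (hFk f hf) ((hFk _ (hfs m)).sub (hFk f hf)) e2
      rwa [add_sub_cancel] at this
    -- `B (ξₘ) (fₘ) - B ξ f = B (ξₘ - ξ) fₘ + B ξ (fₘ - f)`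
    have b1 := hbd (ξs m - ξ) _ (fs m) ε _ ((hB _ _ (hξs m) (hfs m)).sub_left (hB _ _ hξ (hfs m)))
      hε0.le e1 (hFk _ (hfs m)) e3 ψ D hψr.1 hz hD
    have b2 := hbd ξ _ (fs m - f) M _ ((hB _ _ hξ (hfs m)).sub_right hκ (hFc _ (hfs m)) (hFc f hf)
      (hB _ _ hξ hf)) hM hξM ((hFk _ (hfs m)).sub (hFk f hf)) e2 ψ D hψr.1 hz hD
    rw [LinearMap.sub_apply] at b1 b2
    rw [Real.dist_eq]
    have b3 := abs_sub_le (prodB r κ (ξs m) (fs m) ψ) (prodB r κ ξ (fs m) ψ) (prodB r κ ξ f ψ)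
    have b4 : C * (ε * (A + C' * ε)) * D + C * (M * (C' * ε)) * D ≤ T * ε := by
      have : C * (ε * (A + C' * ε)) * D ≤ C * (ε * (A + C' * 1)) * D := by gcongr
      rw [hT]
      linarith
    have b5 : T * ε < η := by
      calc T * ε ≤ T * (η / (T + 1)) := by gcongr; exact min_le_right _ _
        _ < (T + 1) * (η / (T + 1)) := by gcongr; linarith
        _ = η := by field_simp
    linarith
end
end

section
/- Let 𝒯 = (A,T,G) be a regularity structure with a model (Π,Γ) on ℝ^d. Let V and V̄ be sectors of 𝒯 (i.e. G-invariant graded subspaces V = ⊕_{α∈A} V_α with V_α ⊂ T_α, and similarly for V̄), and let ⋆ : V × V̄ → T be a product, i.e. a bilinear map such that τ ⋆ τ̄ ∈ T_{α+β} for all τ ∈ V_α, τ̄ ∈ V̄_β, and Γ(τ ⋆ τ̄) = (Γτ) ⋆ (Γτ̄) for every Γ ∈ G. Let γ_1, γ_2 > 0 and α_1, α_2 ∈ ℝ, let f_1 ∈ D^{γ_1} take values in V ∩ ⊕_{β ≥ α_1} T_β and f_2 ∈ D^{γ_2} take values in V̄ ∩ ⊕_{β ≥ α_2} T_β. Set α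 = α_1 + α_2 and γ = (γ_1 + α_2) ∧ (γ_2 + α_1), and define f(x) to be the projection of f_1(x) ⋆ f_2(x) onto ⊕_{β < γ} T_β. Then f ∈ D^γ and f takes values in ⊕_{β ≥ α} T_β. (Product of modelled distributions.) -/
/-!
Write `Δₖ(x,y) = fₖ(x) - Γ_{xy} fₖ(y)`. Since `Γ_{xy}` is multiplicative on the sectors,

`f₁(x) ⋆ f₂(x) - Γ_{xy} (f₁(y) ⋆ f₂(y)) = Δ₁ ⋆ f₂(x) + f₁(x) ⋆ Δ₂ - Δ₁ ⋆ Δ₂`,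

and replacing the product at `y` by its truncation `f(y)` adds the term `Γ_{xy} h(y)`, where
`h(y)` is the part of `f₁(y) ⋆ f₂(y)` of degree at least `γ`.

In degree `δ < γ` only components of degrees `j + k = δ` contribute to a product. Thus
`Δ₁ ⋆ f₂(x)` is of order `γ₁ - j = γ₁ + k - δ ≥ γ₁ + α₂ - δ`, symmetrically for `f₁(x) ⋆ Δ₂`, and
`Δ₁ ⋆ Δ₂` is of order `γ₁ + γ₂ - δ`, where `γ₁ + γ₂ ≥ γ₁ + α₂` as soon as `f₂ ≠ 0`. The term
`Γ_{xy} h(y)` is of order at least `γ - δ` by the bounds on the model. All orders are measured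
by the predicate `IsOrder`, for which finite sums (`IsOrder.sum`), bilinear maps
(`IsOrder.bilin`) and lowering of the exponent on bounded sets (`IsOrder.mono`) are available;
`isOrder_star` reduces a product to its homogeneous components.
-/

open MeasureTheory Metric Set Filter

noncomputable section

section RegularityStructures

variable {d : ℕ} {ι : Type} [Fintype ι] [DecidableEq ι]
  {T : ι → Type} [∀ i, NormedAddCommGroup (T i)] [∀ i, NormedSpace ℝ (T i)]

/-- `G` is a structure group for the grading `deg`: a group of invertible linear maps on
`T = ⊕_α T_α` such that `Γ τ - τ` has components only in degrees `< α` for `τ ∈ T_α`. -/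
def IsStructureGroup (deg : ι → ℝ) (G : Set ((∀ i, T i) ≃ₗ[ℝ] (∀ i, T i))) : Prop :=
  (LinearEquiv.refl ℝ (∀ i, T i)) ∈ G ∧
  (∀ g₁ ∈ G, ∀ g₂ ∈ G, (g₂.trans g₁) ∈ G) ∧
  (∀ g ∈ G, g.symm ∈ G) ∧
  (∀ g ∈ G, ∀ (i : ι) (v : T i), ∀ j : ι, deg i ≤ deg j →
    (g (Pi.single i v) - Pi.single i v) j = 0)

/-- `(Pmap, Γ)` is a model for the regularity structure `(deg, T, G)` on `ℝ^d`,
with analytical bounds tested against test functions in `B_r`. -/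
def IsModel (r : ℕ) (deg : ι → ℝ) (G : Set ((∀ i, T i) ≃ₗ[ℝ] (∀ i, T i)))
    (Pmap : Rd d → (∀ i, T i) →ₗ[ℝ] ((Rd d → ℝ) →ₗ[ℝ] ℝ))
    (Γ : Rd d → Rd d → ((∀ i, T i) ≃ₗ[ℝ] (∀ i, T i))) : Prop :=
  (∀ x y : Rd d, Γ x y ∈ G) ∧
  (∀ (x : Rd d) (τ : ∀ i, T i), IsDistribution (Pmap x τ)) ∧
  (∀ x y z : Rd d, ∀ τ : ∀ i, T i, Γ x y (Γ y z τ) = Γ x z τ) ∧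
  (∀ x y : Rd d, ∀ (τ : ∀ i, T i) (ψ : Rd d → ℝ), Pmap x (Γ x y τ) ψ = Pmap y τ ψ) ∧
  (∀ K : Set (Rd d), IsCompact K → ∃ C : ℝ,
    (∀ (i : ι) (v : T i), ∀ x ∈ K, ∀ φ ∈ Br d r, ∀ l : ℝ, 0 < l → l ≤ 1 →
      |Pmap x (Pi.single i v) (scal φ x l)| ≤ C * l ^ (deg i) * ‖v‖) ∧
    (∀ i j : ι, deg j < deg i → ∀ v : T i, ∀ x ∈ K, ∀ y ∈ K,
      ‖Γ x y (Pi.single i v) j‖ ≤ C * ‖x - y‖ ^ (deg i - deg j) * ‖v‖))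

/-- `f` belongs to the space `D^γ` of modelled distributions. -/
def InD (deg : ι → ℝ) (γ : ℝ) (Γ : Rd d → Rd d → ((∀ i, T i) ≃ₗ[ℝ] (∀ i, T i)))
    (f : Rd d → ∀ i, T i) : Prop :=
  (∀ (x : Rd d) (i : ι), γ ≤ deg i → f x i = 0) ∧
  (∀ K : Set (Rd d), IsCompact K → ∃ C : ℝ, ∀ i : ι, deg i < γ →
    ∀ x ∈ K, ∀ y ∈ K, ‖(f x - Γ x y (f y)) i‖ ≤ C * ‖x - y‖ ^ (γ - deg i))

/-- The defining property of the reconstruction `R f` of `f ∈ D^γ`: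
`R f` looks like `Π_x f(x)` near every point `x`, to order `γ`. -/
def Reconstructs (r : ℕ) (Pmap : Rd d → (∀ i, T i) →ₗ[ℝ] ((Rd d → ℝ) →ₗ[ℝ] ℝ))
    (γ : ℝ) (f : Rd d → ∀ i, T i) (ζ : (Rd d → ℝ) →ₗ[ℝ] ℝ) : Prop :=
  IsDistribution ζ ∧
  ∀ K : Set (Rd d), IsCompact K → ∃ C : ℝ, ∀ x ∈ K, ∀ φ ∈ Br d r,
    ∀ l : ℝ, 0 < l → l ≤ 1 →
      |ζ (scal φ x l) - Pmap x (f x) (scal φ x l)| ≤ C * l ^ γ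

end RegularityStructures

/-- `g x y` is of order `‖x - y‖ ^ b`, uniformly over `x, y ∈ K`. -/
def IsOrder {d : ℕ} {E : Type} [NormedAddCommGroup E] (K : Set (Rd d)) (b : ℝ)
    (g : Rd d → Rd d → E) : Prop :=
  ∃ C : ℝ, ∀ x ∈ K, ∀ y ∈ K, ‖g x y‖ ≤ C * ‖x - y‖ ^ b

section Order

variable {d : ℕ} {E F H : Type} [NormedAddCommGroup E] [NormedAddCommGroup F]
  [NormedAddCommGroup H] {K : Set (Rd d)} {a b : ℝ}

lemma IsOrder.exists_nonneg {g : Rd d → Rd d → E} (hg : IsOrder K b g) :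
    ∃ C : ℝ, 0 ≤ C ∧ ∀ x ∈ K, ∀ y ∈ K, ‖g x y‖ ≤ C * ‖x - y‖ ^ b := by
  obtain ⟨C, hC⟩ := hg
  refine ⟨|C|, abs_nonneg C, fun x hx y hy => (hC x hx y hy).trans ?_⟩
  gcongr
  exact le_abs_self C

lemma isOrder_zero : IsOrder K b (fun _ _ => (0 : E)) := ⟨0, by simp⟩

lemma IsOrder.add {g h : Rd d → Rd d → E} (hg : IsOrder K b g) (hh : IsOrder K b h) :
    IsOrder K b (fun x y => g x y + h x y) := by
  obtain ⟨C, hC⟩ := hg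
  obtain ⟨D, hD⟩ := hh
  refine ⟨C + D, fun x hx y hy => ?_⟩
  rw [add_mul]
  exact (norm_add_le _ _).trans (add_le_add (hC x hx y hy) (hD x hx y hy))

lemma IsOrder.neg {g : Rd d → Rd d → E} (hg : IsOrder K b g) :
    IsOrder K b (fun x y => - g x y) := by
  obtain ⟨C, hC⟩ := hg
  exact ⟨C, fun x hx y hy => by simpa using hC x hx y hy⟩

lemma IsOrder.sum {κ : Type} (s : Finset κ) {g : κ → Rd d → Rd d → E}
    (hg : ∀ k ∈ s, IsOrder K b (g k)) : IsOrder K b (fun x y => ∑ k ∈ s, g k x y) := by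
  classical
  induction s using Finset.induction_on with
  | empty => simpa using isOrder_zero
  | insert k s hk ih =>
    simp only [Finset.sum_insert hk]
    exact (hg k (by simp)).add (ih fun m hm => hg m (by simp [hm]))

/-- On a bounded set, a higher order implies a lower (nonnegative) one. -/
lemma IsOrder.mono (hK : IsCompact K) {g : Rd d → Rd d → E} (hb : 0 ≤ b) (hab : b ≤ a)
    (hg : IsOrder K a g) : IsOrder K b g := by
  obtain ⟨C, hC0, hC⟩ := hg.exists_nonneg
  refine ⟨C * Metric.diam K ^ (a - b), fun x hx y hy => (hC x hx y hy).trans ?_⟩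
  have hab' : 0 ≤ a - b := sub_nonneg.2 hab
  have hd : ‖x - y‖ ≤ Metric.diam K := by
    rw [← dist_eq_norm]
    exact Metric.dist_le_diam_of_mem hK.isBounded hx hy
  have hsplit : ‖x - y‖ ^ a = ‖x - y‖ ^ (a - b) * ‖x - y‖ ^ b := by
    rw [← Real.rpow_add_of_nonneg (norm_nonneg _) hab' hb, sub_add_cancel]
  rw [hsplit, mul_assoc]
  gcongr

variable [NormedSpace ℝ E] [NormedSpace ℝ F] [NormedSpace ℝ H]

/-- Bilinear maps on finite-dimensional spaces are bounded, so orders add up. -/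
lemma IsOrder.bilin [FiniteDimensional ℝ E] [FiniteDimensional ℝ F] (B : E →ₗ[ℝ] F →ₗ[ℝ] H)
    {g : Rd d → Rd d → E} {h : Rd d → Rd d → F} (ha : 0 ≤ a) (hb : 0 ≤ b)
    (hg : IsOrder K a g) (hh : IsOrder K b h) :
    IsOrder K (a + b) (fun x y => B (g x y) (h x y)) := by
  obtain ⟨C, hC0, hC⟩ := hg.exists_nonneg
  obtain ⟨D, hD0, hD⟩ := hh.exists_nonneg
  let B' : E →L[ℝ] F →L[ℝ] H := LinearMap.toContinuousLinearMap
    ((LinearMap.toContinuousLinearMap : (F →ₗ[ℝ] H) ≃ₗ[ℝ] (F →L[ℝ] H)).toLinearMap ∘ₗ B)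
  refine ⟨‖B'‖ * C * D, fun x hx y hy => ?_⟩
  calc ‖B (g x y) (h x y)‖ = ‖B' (g x y) (h x y)‖ := rfl
    _ ≤ ‖B'‖ * ‖g x y‖ * ‖h x y‖ := B'.le_opNorm₂ _ _
    _ ≤ ‖B'‖ * (C * ‖x - y‖ ^ a) * (D * ‖x - y‖ ^ b) := by
        gcongr
        · exact hC x hx y hy
        · exact hD x hx y hy
    _ = ‖B'‖ * C * D * ‖x - y‖ ^ (a + b) := by
        rw [Real.rpow_add_of_nonneg (norm_nonneg _) ha hb]
        ring

end Order

section Graded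

variable {d : ℕ} {ι : Type} [Fintype ι] [DecidableEq ι]
  {T : ι → Type} [∀ i, NormedAddCommGroup (T i)] [∀ i, NormedSpace ℝ (T i)]

lemma map_apply_eq_sum_single (L : (∀ i, T i) →ₗ[ℝ] (∀ i, T i)) (u : ∀ i, T i) (i : ι) :
    L u i = ∑ j, L (Pi.single j (u j)) i := by
  conv_lhs => rw [← Finset.univ_sum_single u]
  rw [map_sum, Finset.sum_apply]

lemma star_apply_eq_sum_single (star : (∀ i, T i) →ₗ[ℝ] (∀ i, T i) →ₗ[ℝ] (∀ i, T i))
    (u v : ∀ i, T i) (i : ι) :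
    star u v i = ∑ j, ∑ k, star (Pi.single j (u j)) (Pi.single k (v k)) i := by
  rw [← LinearMap.flip_apply, map_apply_eq_sum_single]
  refine Finset.sum_congr rfl fun j _ => ?_
  rw [LinearMap.flip_apply, map_apply_eq_sum_single]

/-- The structure group preserves the space of elements of degree less than `γ`. -/
lemma structureGroup_apply_eq_zero {deg : ι → ℝ} {G : Set ((∀ i, T i) ≃ₗ[ℝ] (∀ i, T i))}
    (hG : IsStructureGroup deg G) {g : (∀ i, T i) ≃ₗ[ℝ] (∀ i, T i)} (hg : g ∈ G) {γ : ℝ}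
    {u : ∀ i, T i} (hu : ∀ i, γ ≤ deg i → u i = 0) {j : ι} (hj : γ ≤ deg j) : g u j = 0 := by
  have h := map_apply_eq_sum_single g.toLinearMap u j
  rw [LinearEquiv.coe_coe] at h
  rw [h]
  refine Finset.sum_eq_zero fun i _ => ?_
  rcases le_or_gt γ (deg i) with hi | hi
  · simp [hu i hi]
  · have hlt : deg i < deg j := hi.trans_le hj
    have hne : j ≠ i := fun e => by simp [e] at hlt
    have h0 := hG.2.2.2 g hg i (u i) j hlt.le
    rw [Pi.sub_apply, Pi.single_eq_of_ne hne, sub_zero] at h0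
    exact h0

/-- The degree-`deg i` part of a product is controlled by the pairs of components whose degrees
add up to `deg i`. It suffices that each pair has orders `a`, `c` with `b ≤ a + c`, or that one
of the two components vanishes. -/
lemma isOrder_star [∀ i, FiniteDimensional ℝ (T i)] {deg : ι → ℝ}
    {V Vb : ∀ i, Submodule ℝ (T i)}
    {star : (∀ i, T i) →ₗ[ℝ] (∀ i, T i) →ₗ[ℝ] (∀ i, T i)}
    (hstar_hom : ∀ (i j : ι) (v : T i) (w : T j), v ∈ V i → w ∈ Vb j →
      ∀ m : ι, deg m ≠ deg i + deg j → star (Pi.single i v) (Pi.single j w) m = 0)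
    {K : Set (Rd d)} (hK : IsCompact K) {b : ℝ} (hb : 0 ≤ b)
    {u v : Rd d → Rd d → ∀ i, T i} (hu : ∀ x y i, u x y i ∈ V i) (hv : ∀ x y i, v x y i ∈ Vb i)
    (i : ι)
    (h : ∀ j k, deg i = deg j + deg k →
      (∀ x y, u x y j = 0) ∨ (∀ x y, v x y k = 0) ∨
      ∃ a c : ℝ, 0 ≤ a ∧ 0 ≤ c ∧ b ≤ a + c ∧
        IsOrder K a (fun x y => u x y j) ∧ IsOrder K c (fun x y => v x y k)) :
    IsOrder K b (fun x y => star (u x y) (v x y) i) := by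
  have hsum : (fun x y => star (u x y) (v x y) i) = fun x y =>
      ∑ j, ∑ k, star (Pi.single j (u x y j)) (Pi.single k (v x y k)) i :=
    funext fun x => funext fun y => star_apply_eq_sum_single star (u x y) (v x y) i
  rw [hsum]
  refine IsOrder.sum _ fun j _ => IsOrder.sum _ fun k _ => ?_
  by_cases hdeg : deg i = deg j + deg k
  · rcases h j k hdeg with h0 | h0 | ⟨a, c, ha, hc, hac, hua, hvc⟩
    · simpa [h0] using isOrder_zero
    · simpa [h0] using isOrder_zero
    · let B : T j →ₗ[ℝ] T k →ₗ[ℝ] T i :=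
        (star.compl₁₂ (LinearMap.single ℝ T j) (LinearMap.single ℝ T k)).compr₂
          (LinearMap.proj i)
      exact (IsOrder.bilin B ha hc hua hvc).mono hK hb hac
  · have h0 : ∀ x y, star (Pi.single j (u x y j)) (Pi.single k (v x y k)) i = 0 :=
      fun x y => hstar_hom j k _ _ (hu x y j) (hv x y k) i hdeg
    simpa [h0] using isOrder_zero

end Graded

/-- **Product of modelled distributions** (Theorem `theo:mult`): if `f₁ ∈ D^{γ₁}_{α₁}(V)`
and `f₂ ∈ D^{γ₂}_{α₂}(V̄)` and `⋆` is a product on the sectors `(V, V̄)`, then the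
pointwise product, truncated at level `γ = (γ₁+α₂) ∧ (γ₂+α₁)`, belongs to
`D^γ_α` with `α = α₁+α₂`. -/
theorem product_of_modelled_distributions
    (d r : ℕ) (hd : 1 ≤ d)
    {ι : Type} [Fintype ι] [DecidableEq ι] [Nonempty ι] (deg : ι → ℝ)
    {T : ι → Type} [∀ i, NormedAddCommGroup (T i)] [∀ i, NormedSpace ℝ (T i)]
    [∀ i, FiniteDimensional ℝ (T i)]
    (G : Set ((∀ i, T i) ≃ₗ[ℝ] (∀ i, T i))) (hG : IsStructureGroup deg G)
    (hr : |⨅ i, deg i| < (r : ℝ))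
    (Pmap : Rd d → (∀ i, T i) →ₗ[ℝ] ((Rd d → ℝ) →ₗ[ℝ] ℝ))
    (Γ : Rd d → Rd d → ((∀ i, T i) ≃ₗ[ℝ] (∀ i, T i)))
    (hmodel : IsModel r deg G Pmap Γ)
    -- the sectors V and V̄ : G-invariant graded subspaces
    (V Vb : ∀ i, Submodule ℝ (T i))
    (hV : ∀ g ∈ G, ∀ τ : ∀ i, T i, (∀ i, τ i ∈ V i) → ∀ i, g τ i ∈ V i)
    (hVb : ∀ g ∈ G, ∀ τ : ∀ i, T i, (∀ i, τ i ∈ Vb i) → ∀ i, g τ i ∈ Vb i)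
    -- the product ⋆ on (V, V̄)
    (star : (∀ i, T i) →ₗ[ℝ] (∀ i, T i) →ₗ[ℝ] (∀ i, T i))
    (hstar_hom : ∀ (i j : ι) (v : T i) (w : T j), v ∈ V i → w ∈ Vb j →
      ∀ m : ι, deg m ≠ deg i + deg j → star (Pi.single i v) (Pi.single j w) m = 0)
    (hstar_cov : ∀ g ∈ G, ∀ τ τ' : ∀ i, T i, (∀ i, τ i ∈ V i) → (∀ i, τ' i ∈ Vb i) →
      g (star τ τ') = star (g τ) (g τ'))
    -- f₁ ∈ D^{γ₁}_{α₁}(V), f₂ ∈ D^{γ₂}_{α₂}(V̄), locally bounded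
    (γ₁ γ₂ α₁ α₂ : ℝ) (hγ₁ : 0 < γ₁) (hγ₂ : 0 < γ₂)
    (f₁ f₂ : Rd d → ∀ i, T i)
    (hf₁ : InD deg γ₁ Γ f₁) (hf₁V : ∀ x i, f₁ x i ∈ V i)
    (hf₁α : ∀ x i, deg i < α₁ → f₁ x i = 0)
    (hf₁bdd : ∀ K : Set (Rd d), IsCompact K → ∃ C, ∀ x ∈ K, ∀ i, ‖f₁ x i‖ ≤ C)
    (hf₂ : InD deg γ₂ Γ f₂) (hf₂V : ∀ x i, f₂ x i ∈ Vb i)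
    (hf₂α : ∀ x i, deg i < α₂ → f₂ x i = 0)
    (hf₂bdd : ∀ K : Set (Rd d), IsCompact K → ∃ C, ∀ x ∈ K, ∀ i, ‖f₂ x i‖ ≤ C)
    -- the truncated pointwise product
    (f : Rd d → ∀ i, T i)
    (hf : ∀ x i, f x i =
      if deg i < min (γ₁ + α₂) (γ₂ + α₁) then star (f₁ x) (f₂ x) i else 0) :
    InD deg (min (γ₁ + α₂) (γ₂ + α₁)) Γ f ∧
    (∀ x i, deg i < α₁ + α₂ → f x i = 0) := by
  have hval : ∀ x i, deg i < α₁ + α₂ → star (f₁ x) (f₂ x) i = 0 := by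
    intro x i hi
    rw [star_apply_eq_sum_single]
    refine Finset.sum_eq_zero fun j _ => Finset.sum_eq_zero fun k _ => ?_
    by_cases hdeg : deg i = deg j + deg k
    · rcases lt_or_ge (deg j) α₁ with hj | hj
      · simp [hf₁α x j hj]
      · have hk : deg k < α₂ := by linarith
        simp [hf₂α x k hk]
    · exact hstar_hom j k _ _ (hf₁V x j) (hf₂V x k) i hdeg
  refine ⟨⟨fun x i hi => by rw [hf, if_neg (not_lt.2 hi)], fun K hK => ?_⟩,
    fun x i hi => by rw [hf, hval x i hi, ite_self]⟩
  set γ := min (γ₁ + α₂) (γ₂ + α₁) with hγ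
  have hγle₁ : γ ≤ γ₁ + α₂ := min_le_left _ _
  have hγle₂ : γ ≤ γ₂ + α₁ := min_le_right _ _
  obtain ⟨hΓG, -, -, -, hbd⟩ := hmodel
  obtain ⟨CΓ, -, hCΓ⟩ := hbd K hK
  let Δ₁ : Rd d → Rd d → ∀ i, T i := fun x y => f₁ x - Γ x y (f₁ y)
  let Δ₂ : Rd d → Rd d → ∀ i, T i := fun x y => f₂ x - Γ x y (f₂ y)
  have hΔ₁V : ∀ x y i, Δ₁ x y i ∈ V i := fun x y i =>
    (V i).sub_mem (hf₁V x i) (hV _ (hΓG x y) _ (hf₁V y) i)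
  have hΔ₂V : ∀ x y i, Δ₂ x y i ∈ Vb i := fun x y i =>
    (Vb i).sub_mem (hf₂V x i) (hVb _ (hΓG x y) _ (hf₂V y) i)
  have hΔ₁0 : ∀ j, γ₁ ≤ deg j → ∀ x y, Δ₁ x y j = 0 := fun j hj x y => by
    simp only [Δ₁, Pi.sub_apply, hf₁.1 x j hj,
      structureGroup_apply_eq_zero hG (hΓG x y) (hf₁.1 y) hj, sub_zero]
  have hΔ₂0 : ∀ j, γ₂ ≤ deg j → ∀ x y, Δ₂ x y j = 0 := fun j hj x y => by
    simp only [Δ₂, Pi.sub_apply, hf₂.1 x j hj,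
      structureGroup_apply_eq_zero hG (hΓG x y) (hf₂.1 y) hj, sub_zero]
  have hΔ₁O : ∀ j, deg j < γ₁ → IsOrder K (γ₁ - deg j) (fun x y => Δ₁ x y j) := by
    obtain ⟨C, hC⟩ := hf₁.2 K hK
    exact fun j hj => ⟨C, hC j hj⟩
  have hΔ₂O : ∀ j, deg j < γ₂ → IsOrder K (γ₂ - deg j) (fun x y => Δ₂ x y j) := by
    obtain ⟨C, hC⟩ := hf₂.2 K hK
    exact fun j hj => ⟨C, hC j hj⟩
  have hf₁O : ∀ j, IsOrder K 0 (fun x _ => f₁ x j) ∧ IsOrder K 0 (fun _ y => f₁ y j) := by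
    obtain ⟨C, hC⟩ := hf₁bdd K hK
    exact fun j => ⟨⟨C, fun x hx y hy => by simpa using hC x hx j⟩,
      ⟨C, fun x hx y hy => by simpa using hC y hy j⟩⟩
  have hf₂O : ∀ j, IsOrder K 0 (fun x _ => f₂ x j) ∧ IsOrder K 0 (fun _ y => f₂ y j) := by
    obtain ⟨C, hC⟩ := hf₂bdd K hK
    exact fun j => ⟨⟨C, fun x hx y hy => by simpa using hC x hx j⟩,
      ⟨C, fun x hx y hy => by simpa using hC y hy j⟩⟩
  -- the part of the product discarded by the truncation
  let h : Rd d → ∀ i, T i := fun y => star (f₁ y) (f₂ y) - f y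
  have hh : ∀ y m, h y m = if deg m < γ then 0 else star (f₁ y) (f₂ y) m := by
    intro y m
    simp only [h, Pi.sub_apply, hf]
    split_ifs <;> simp
  have hdecomp : ∀ x y i, (f x - Γ x y (f y)) i = (f x - star (f₁ x) (f₂ x)) i +
      (star (Δ₁ x y) (f₂ x) i + star (f₁ x) (Δ₂ x y) i + -(star (Δ₁ x y) (Δ₂ x y) i)
        + Γ x y (h y) i) := by
    intro x y i
    simp only [h, map_sub, hstar_cov _ (hΓG x y) _ _ (hf₁V y) (hf₂V y), Δ₁, Δ₂,
      LinearMap.sub_apply, Pi.sub_apply]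
    abel
  have key : ∀ i, deg i < γ → IsOrder K (γ - deg i) (fun x y => (f x - Γ x y (f y)) i) := by
    intro i hi
    have hi0 : 0 ≤ γ - deg i := by linarith
    have hfx : ∀ x, (f x - star (f₁ x) (f₂ x)) i = 0 := fun x => by
      rw [Pi.sub_apply, hf, if_pos hi, sub_self]
    simp only [hdecomp, hfx, zero_add]
    refine ((IsOrder.add ?_ ?_).add (IsOrder.neg ?_)).add ?_
    · refine isOrder_star (v := fun x _ => f₂ x) hstar_hom hK hi0 hΔ₁V (fun x _ => hf₂V x) i
        fun j k hjk => ?_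
      rcases le_or_gt γ₁ (deg j) with hj | hj
      · exact Or.inl (hΔ₁0 j hj)
      rcases lt_or_ge (deg k) α₂ with hk | hk
      · exact Or.inr (Or.inl fun x _ => hf₂α x k hk)
      exact Or.inr (Or.inr ⟨γ₁ - deg j, 0, by linarith, le_rfl, by linarith, hΔ₁O j hj,
        (hf₂O k).1⟩)
    · refine isOrder_star (u := fun x _ => f₁ x) hstar_hom hK hi0 (fun x _ => hf₁V x) hΔ₂V i
        fun j k hjk => ?_
      rcases le_or_gt γ₂ (deg k) with hk | hk
      · exact Or.inr (Or.inl (hΔ₂0 k hk))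
      rcases lt_or_ge (deg j) α₁ with hj | hj
      · exact Or.inl fun x _ => hf₁α x j hj
      exact Or.inr (Or.inr ⟨0, γ₂ - deg k, le_rfl, by linarith, by linarith, (hf₁O j).1,
        hΔ₂O k hk⟩)
    · refine isOrder_star hstar_hom hK hi0 hΔ₁V hΔ₂V i fun j k hjk => ?_
      rcases le_or_gt γ₁ (deg j) with hj | hj
      · exact Or.inl (hΔ₁0 j hj)
      rcases le_or_gt γ₂ (deg k) with hk | hk
      · exact Or.inr (Or.inl (hΔ₂0 k hk))
      rcases lt_or_ge γ₂ α₂ with hα | hα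
      · -- no degree lies in `[α₂, γ₂)`, so `f₂` vanishes identically
        have hz : ∀ x, f₂ x = 0 := fun x => funext fun m => by
          rcases lt_or_ge (deg m) α₂ with hm | hm
          · exact hf₂α x m hm
          · exact hf₂.1 x m (by linarith)
        exact Or.inr (Or.inl fun x y => by simp [Δ₂, hz])
      exact Or.inr (Or.inr ⟨γ₁ - deg j, γ₂ - deg k, by linarith, by linarith, by linarith,
        hΔ₁O j hj, hΔ₂O k hk⟩)
    · have hsum : ∀ x y, Γ x y (h y) i = ∑ m, Γ x y (Pi.single m (h y m)) i := fun x y =>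
        map_apply_eq_sum_single (Γ x y).toLinearMap (h y) i
      simp only [hsum]
      refine IsOrder.sum _ fun m _ => ?_
      rcases lt_or_ge (deg m) γ with hm | hm
      · simpa [hh, hm] using isOrder_zero
      have hbdd : IsOrder K 0 (fun _ y => star (f₁ y) (f₂ y) m) :=
        isOrder_star (u := fun _ y => f₁ y) (v := fun _ y => f₂ y) hstar_hom hK le_rfl
          (fun _ y => hf₁V y) (fun _ y => hf₂V y) m fun j k _ => Or.inr (Or.inr
            ⟨0, 0, le_rfl, le_rfl, by simp, (hf₁O j).2, (hf₂O k).2⟩)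
      obtain ⟨D, hD0, hD⟩ := hbdd.exists_nonneg
      refine IsOrder.mono (a := deg m - deg i) hK hi0 (by linarith)
        ⟨|CΓ| * D, fun x hx y hy => ?_⟩
      have hDy := hD x hx y hy
      rw [Real.rpow_zero, mul_one] at hDy
      beta_reduce
      rw [hh, if_neg (not_lt.2 hm)]
      calc _ ≤ CΓ * ‖x - y‖ ^ (deg m - deg i) * ‖star (f₁ y) (f₂ y) m‖ :=
            hCΓ m i (by linarith) _ x hx y hy
        _ ≤ |CΓ| * ‖x - y‖ ^ (deg m - deg i) * D := by
            gcongr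
            exact le_abs_self CΓ
        _ = |CΓ| * D * ‖x - y‖ ^ (deg m - deg i) := by ring
  -- one constant for all the finitely many degrees
  have key' : ∀ i, ∃ C : ℝ, 0 ≤ C ∧ (deg i < γ → ∀ x ∈ K, ∀ y ∈ K,
      ‖(f x - Γ x y (f y)) i‖ ≤ C * ‖x - y‖ ^ (γ - deg i)) := by
    intro i
    by_cases hi : deg i < γ
    · obtain ⟨C, hC0, hC⟩ := (key i hi).exists_nonneg
      exact ⟨C, hC0, fun _ => hC⟩
    · exact ⟨0, le_rfl, fun h => absurd h hi⟩
  choose C hC0 hC using key'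
  refine ⟨∑ i, C i, fun i hi x hx y hy => (hC i hi x hx y hy).trans ?_⟩
  gcongr
  exact Finset.single_le_sum (fun j _ => hC0 j) (Finset.mem_univ i)
end
end
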